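/- arXiv:1711.07029 — 4 statements merged into one kernel-verified Lean document; each statement's English description precedes it below -/
import Mathlib

section
/- For all integers n ≥ 2 and k with n + 1 ≤ k ≤ 2n − 1, there exists a universal cycle for the set of 1-2 augmented onto words of length k over Fin n, i.e., words w : Fin k → Fin n in which every letter a ∈ Fin n occurs at least once and at most twice. -/
/- The finite set of words of length `k` over a finite alphabet `A`
satisfying a predicate `P`. -/
open Classical in
noncomputable def wordsOf {A : Type*} [Fintype A] {k : ℕ} (P : (Fin k → A) → Prop) :
    Finset (Fin k → A) :=
  Finset.univ.filter P

/-- A nonempty finite set `S` of words of length `k` over `A` admits a universal cycle: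
a function `c : ZMod S.card → A` such that `i ↦ (fun j => c (i + j))` is a bijection
from `ZMod S.card` onto `S`. -/
def HasUCycle {A : Type*} {k : ℕ} (S : Finset (Fin k → A)) : Prop :=
  ∃ c : ZMod S.card → A,
    Set.BijOn (fun i : ZMod S.card => fun j : Fin k => c (i + (j.val : ZMod S.card)))
      Set.univ ↑S

/-!
Let `S` be a set of words of length `k` closed under rotation. Consider the permutations of all
words that map `S` onto itself and send each word `x₀x₁…x_{k-1}` to some word `x₁…x_{k-1}y`;
rotation is one of them. If `u, v ∈ S` differ only in their first letter and lie on distinct cycles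
of such a permutation `σ`, then `σ * swap u v` is again such a permutation, with these two cycles
merged. When no further merging is possible, words of `S` that differ only in their first letter
share a cycle; hence so do a word and its rotation, and hence so do words that differ in a single
position, since that position can be rotated to the front. So if any two words of `S` are joined by
a chain of single-letter substitutions inside `S`, then `S` is one cycle, and the first letters read
along it form a universal cycle.

For words in which each letter `a` occurs at least `lo a` and at most `hi a` times, where
`lo a < hi a`, such chains exist when `∑ lo < k < ∑ hi`. Some letter then has a spare occurrence and
some letter has room for one more, and this suffices to transpose any two positions; substitutions
that move an excess occurrence to a deficient letter take care of the rest.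
-/

namespace UniversalCycle

open Equiv Finset Function Relation

/-! ### Merging the cycles of a permutation -/

section MergingCycles

variable {α : Type*} [Finite α] {σ : Perm α} {x y : α}

theorem sameCycle_induction {P : α → Prop} (hxy : σ.SameCycle x y) (hx : P x)
    (hσ : ∀ z, P z → P (σ z)) : P y := by
  obtain ⟨i, rfl⟩ := hxy.exists_nat_pow_eq
  clear hxy
  induction i with
  | zero => exact hx
  | succ i ih => simpa only [pow_succ', Perm.mul_apply] using hσ _ ih

theorem sameCycle_le_of_forall_apply {τ : Perm α} (h : ∀ z, τ.SameCycle z (σ z)) :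
    σ.SameCycle ≤ τ.SameCycle :=
  fun u _ huv => sameCycle_induction (P := τ.SameCycle u) huv (.refl τ u) fun z hz => hz.trans (h z)

variable [DecidableEq α]

theorem sameCycle_mul_swap (h : ¬σ.SameCycle x y) : (σ * swap x y).SameCycle x y := by
  by_contra hτ
  suffices hy : (σ * swap x y).SameCycle x y ∧ σ.SameCycle y y from hτ hy.1
  have hσy : σ.SameCycle (σ y) y := Perm.sameCycle_apply_left.2 (.refl σ y)
  -- The cycle of `y` under `σ` avoids `x`, so from `σ y` on it is followed by `σ * swap x y`.
  refine sameCycle_induction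
    (P := fun z => (σ * swap x y).SameCycle x z ∧ σ.SameCycle y z) hσy ⟨?_, hσy.symm⟩ ?_
  · exact ⟨1, by simp⟩
  · rintro z ⟨hxz, hyz⟩
    have hzx : z ≠ x := by rintro rfl; exact h hyz.symm
    have hzy : z ≠ y := by rintro rfl; exact hτ hxz
    have hσz : (σ * swap x y) z = σ z := by
      rw [Perm.mul_apply, swap_apply_of_ne_of_ne hzx hzy]
    exact ⟨hσz ▸ Perm.sameCycle_apply_right.2 hxz, Perm.sameCycle_apply_right.2 hyz⟩

theorem sameCycle_le_mul_swap (h : ¬σ.SameCycle x y) :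
    σ.SameCycle ≤ (σ * swap x y).SameCycle := by
  have hxy := sameCycle_mul_swap h
  refine sameCycle_le_of_forall_apply fun z => ?_
  have hz : σ z = (σ * swap x y) (swap x y z) := by simp
  rw [hz, Perm.sameCycle_apply_right]
  rcases eq_or_ne z x with rfl | hzx
  · simpa using hxy
  rcases eq_or_ne z y with rfl | hzy
  · simpa using hxy.symm
  · rw [swap_apply_of_ne_of_ne hzx hzy]

end MergingCycles

/-! ### Shift permutations and universal cycles -/

section Shift

variable {A : Type*} {m : ℕ}

/-- A permutation of the words of length `m + 1` is a shift if it drops the first letter of each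
word and appends some letter. The cycles of a shift are closed walks in the de Bruijn graph. -/
def IsShift (σ : Perm (Fin (m + 1) → A)) : Prop :=
  ∀ w (j : Fin m), σ w j.castSucc = w j.succ

theorem IsShift.pow_apply_zero {σ : Perm (Fin (m + 1) → A)} (hσ : IsShift σ)
    (w : Fin (m + 1) → A) (j : Fin (m + 1)) : (σ ^ (j : ℕ)) w 0 = w j := by
  induction j using Fin.induction generalizing w with
  | zero => rfl
  | succ j ih => rw [Fin.val_succ, pow_succ, Perm.mul_apply, ← hσ w j, ← ih (σ w), Fin.val_castSucc]

theorem IsShift.mul_swap [DecidableEq (Fin (m + 1) → A)] {σ : Perm (Fin (m + 1) → A)}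
    (hσ : IsShift σ) {u v : Fin (m + 1) → A} (huv : ∀ j : Fin m, u j.succ = v j.succ) :
    IsShift (σ * swap u v) := by
  intro w j
  rw [Perm.mul_apply, hσ, swap_apply_def]
  split_ifs with hwu hwv
  · rw [hwu, huv]
  · rw [hwv, huv]
  · rfl

theorem hasUCycle_of_isCycleOn_shift {σ : Perm (Fin (m + 1) → A)} (hσ : IsShift σ)
    {S : Finset (Fin (m + 1) → A)} (hS : S.Nonempty) (hcyc : σ.IsCycleOn S) : HasUCycle S := by
  obtain ⟨w₀, hw₀⟩ := hS
  have : NeZero #S := ⟨card_ne_zero_of_mem hw₀⟩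
  have pow_eq_iff (a b : ℕ) : (σ ^ a) w₀ = (σ ^ b) w₀ ↔ (a : ZMod #S) = b := by
    rw [hcyc.pow_apply_eq_pow_apply hw₀, ZMod.natCast_eq_natCast_iff]
  let c : ZMod #S → A := fun i => (σ ^ i.val) w₀ 0
  have window (i : ZMod #S) : (fun j : Fin (m + 1) => c (i + (j.val : ZMod #S))) =
      (σ ^ i.val) w₀ := by
    ext j
    have : (σ ^ (i + (j.val : ZMod #S)).val) w₀ = (σ ^ (j.val + i.val)) w₀ := by
      rw [pow_eq_iff]
      simp [add_comm]
    simp only [c, this, pow_add, Perm.mul_apply, hσ.pow_apply_zero]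
  refine ⟨c, Set.BijOn.congr (f₁ := fun i => (σ ^ i.val) w₀) ?_ fun i _ => (window i).symm⟩
  refine ⟨fun i _ => hcyc.1.mapsTo.perm_pow i.val hw₀, fun i _ j _ hij => ?_, fun w hw => ?_⟩
  · simpa using (pow_eq_iff _ _).1 hij
  · obtain ⟨a, -, rfl⟩ := hcyc.exists_pow_eq hw₀ hw
    exact ⟨a, Set.mem_univ _, (pow_eq_iff _ _).2 (by simp)⟩

/-- Cyclic rotation of words by one position, moving the first letter to the end. -/
def rotation (A : Type*) (m : ℕ) : Perm (Fin (m + 1) → A) :=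
  (finRotate (m + 1)).symm.arrowCongr (Equiv.refl A)

theorem rotation_apply (w : Fin (m + 1) → A) (i : Fin (m + 1)) :
    rotation A m w i = w (finRotate (m + 1) i) := rfl

theorem isShift_rotation : IsShift (rotation A m) := by
  intro w j
  rw [rotation_apply, finRotate_apply, Fin.coeSucc_eq_succ]

variable [Finite A] {S : Set (Fin (m + 1) → A)}

theorem exists_isShift_sameCycle_of_tail_eq (hrot : Set.BijOn (rotation A m) S S) :
    ∃ σ : Perm (Fin (m + 1) → A), IsShift σ ∧ Set.BijOn σ S S ∧
      ∀ u ∈ S, ∀ v ∈ S, (∀ j : Fin m, u j.succ = v j.succ) → σ.SameCycle u v := by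
  classical
  obtain ⟨σ, ⟨hσ, hσS⟩, hmax⟩ := (Set.toFinite {σ : Perm (Fin (m + 1) → A) |
    IsShift σ ∧ Set.BijOn σ S S}).exists_maximalFor Perm.SameCycle _
    ⟨rotation A m, isShift_rotation, hrot⟩
  refine ⟨σ, hσ, hσS, fun u hu v hv huv => ?_⟩
  by_contra h
  refine h (hmax ⟨hσ.mul_swap huv, ?_⟩ (sameCycle_le_mul_swap h) u v (sameCycle_mul_swap h))
  exact hσS.comp (Equiv.bijOn_swap hu hv)

end Shift

/-! ### Substituting single letters -/

section Substitution

variable {ι A : Type*} {S : Set (ι → A)}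

/-- Two words of `S` are adjacent if they agree outside a single position. -/
def SubstAdj (S : Set (ι → A)) (u v : ι → A) : Prop :=
  u ∈ S ∧ v ∈ S ∧ ∃ p, ∀ i ≠ p, u i = v i

/-- Two words are connected in `S` if a chain of words of `S` leads from one to the other by
substituting one letter at a time. -/
abbrev SubstConnected (S : Set (ι → A)) : (ι → A) → (ι → A) → Prop :=
  EqvGen (SubstAdj S)

theorem SubstAdj.comp_perm {u v : ι → A} (h : SubstAdj S u v) (e : Perm ι)
    (hu : u ∘ e ∈ S) (hv : v ∘ e ∈ S) : SubstAdj S (u ∘ e) (v ∘ e) := by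
  obtain ⟨-, -, p, hp⟩ := h
  exact ⟨hu, hv, e.symm p, fun i hi => hp _ fun h => hi (e.eq_symm_apply.2 h)⟩

theorem substAdj_update [DecidableEq ι] {w : ι → A} {p : ι} {a : A} (hw : w ∈ S)
    (hup : update w p a ∈ S) : SubstAdj S w (update w p a) :=
  ⟨hw, hup, p, fun _ hi => (update_of_ne hi a w).symm⟩

theorem substConnected_comp_swap_of_update_mem [DecidableEq ι] {w : ι → A} {p q : ι} (hw : w ∈ S)
    (hswap : w ∘ swap p q ∈ S) (hup : update w p (w q) ∈ S) :
    SubstConnected S w (w ∘ swap p q) := by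
  refine .trans _ _ _ (.rel _ _ (substAdj_update hw hup)) (.rel _ _ ⟨hup, hswap, q, fun i hi => ?_⟩)
  rcases eq_or_ne i p with rfl | hip
  · simp
  · simp [hip, swap_apply_of_ne_of_ne hip hi]

end Substitution

section SubstitutionUCycle

variable {A : Type*} {m : ℕ}

theorem sameCycle_of_substAdj {S : Set (Fin (m + 1) → A)} {σ : Perm (Fin (m + 1) → A)}
    (hrot : Set.BijOn (rotation A m) S S) (hσ : IsShift σ) (hσS : Set.BijOn σ S S)
    (htail : ∀ u ∈ S, ∀ v ∈ S, (∀ j : Fin m, u j.succ = v j.succ) → σ.SameCycle u v)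
    {u v : Fin (m + 1) → A} (huv : SubstAdj S u v) : σ.SameCycle u v := by
  have sameCycle_rotation : ∀ w ∈ S, σ.SameCycle w (rotation A m w) := by
    intro w hw
    obtain ⟨w', hw', hσw'⟩ := hσS.surjOn (hrot.mapsTo hw)
    rw [← hσw', Perm.sameCycle_apply_right]
    exact htail w hw w' hw' fun j => by rw [← hσ w', hσw', isShift_rotation]
  obtain ⟨hu, hv, p, hp⟩ := huv
  induction p using Fin.induction generalizing u v with
  | zero => exact htail u hu v hv fun j => hp _ j.succ_ne_zero
  | succ p ih =>
    have hrotate : σ.SameCycle (rotation A m u) (rotation A m v) := by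
      refine ih (hrot.mapsTo hu) (hrot.mapsTo hv) fun i hi => hp _ fun h => hi ?_
      rw [← Fin.coeSucc_eq_succ, ← finRotate_apply] at h
      exact (finRotate (m + 1)).injective h
    exact ((sameCycle_rotation u hu).trans hrotate).trans (sameCycle_rotation v hv).symm

theorem hasUCycle_of_substConnected [Finite A] {S : Finset (Fin (m + 1) → A)} (hS : S.Nonempty)
    (hrot : Set.BijOn (rotation A m) S S) (hconn : ∀ u ∈ S, ∀ v ∈ S, SubstConnected S u v) :
    HasUCycle S := by
  obtain ⟨σ, hσ, hσS, htail⟩ := exists_isShift_sameCycle_of_tail_eq hrot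
  refine hasUCycle_of_isCycleOn_shift hσ hS ⟨hσS, fun u hu v hv => ?_⟩
  rw [← (Perm.SameCycle.equivalence σ).eqvGen_iff]
  exact (hconn u hu v hv).mono (fun _ _ => sameCycle_of_substAdj hrot hσ hσS htail)

end SubstitutionUCycle

/-! ### Words with bounded letter multiplicities -/

theorem coe_wordsOf_mem {A : Type*} [Fintype A] {k : ℕ} (S : Set (Fin k → A)) :
    (wordsOf (· ∈ S) : Set (Fin k → A)) = S := by
  ext w
  simp [wordsOf]

section LetterCount

variable {ι A : Type*} [Fintype ι] [DecidableEq A]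

/-- The number of occurrences of the letter `a` in the word `w`. -/
def letterCount (w : ι → A) (a : A) : ℕ := #{i | w i = a}

theorem letterCount_pos_iff {w : ι → A} {a : A} : 0 < letterCount w a ↔ ∃ i, w i = a := by
  simp [letterCount, card_pos, Finset.Nonempty]

theorem letterCount_comp_perm (w : ι → A) (e : Perm ι) : letterCount (w ∘ e) = letterCount w := by
  ext a
  exact card_equiv e (by simp)

theorem letterCount_update [DecidableEq ι] (w : ι → A) (p : ι) (b c : A) :
    letterCount (update w p b) c + (if w p = c then 1 else 0) =
      letterCount w c + if b = c then 1 else 0 := by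
  have off_p : ∑ i ∈ univ.erase p, (if update w p b i = c then 1 else 0) =
      ∑ i ∈ univ.erase p, if w i = c then 1 else 0 :=
    sum_congr rfl fun i hi => by rw [update_of_ne (ne_of_mem_erase hi)]
  simp only [letterCount, card_filter, ← add_sum_erase univ _ (mem_univ p), off_p, update_self]
  ring

theorem exists_perm_of_letterCount_eq {u v : ι → A} (h : letterCount u = letterCount v) :
    ∃ e : Perm ι, u = v ∘ e := by
  have fiber_equiv (a : A) : Nonempty ({i // u i = a} ≃ {i // v i = a}) := by
    rw [← Fintype.card_eq, Fintype.card_subtype, Fintype.card_subtype]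
    exact congrFun h a
  exact ⟨ofFiberEquiv fun a => (fiber_equiv a).some, funext fun i => (ofFiberEquiv_map _ i).symm⟩

theorem sum_letterCount [Fintype A] (w : ι → A) : ∑ a, letterCount w a = Fintype.card ι :=
  (card_eq_sum_card_fiberwise fun i _ => mem_univ (w i)).symm

theorem exists_letterCount_lt_of_ne [Finite A] {u v : ι → A} (h : letterCount u ≠ letterCount v) :
    ∃ a, letterCount u a < letterCount v a := by
  have := Fintype.ofFinite A
  by_contra! hle
  refine h (funext fun a => ?_)
  exact ((sum_eq_sum_iff_of_le fun a _ => hle a).1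
    ((sum_letterCount v).trans (sum_letterCount u).symm) a (mem_univ a)).symm

variable [Fintype A] {lo hi : A → ℕ}

theorem exists_lo_lt_letterCount (hlo : ∑ a, lo a < Fintype.card ι) (w : ι → A) :
    ∃ h, lo (w h) < letterCount w (w h) := by
  rw [← sum_letterCount w] at hlo
  obtain ⟨a, -, ha⟩ := exists_lt_of_sum_lt hlo
  obtain ⟨h, rfl⟩ := letterCount_pos_iff.1 (Nat.zero_lt_of_lt ha)
  exact ⟨h, ha⟩

theorem exists_letterCount_lt_hi (hhi : Fintype.card ι < ∑ a, hi a) (w : ι → A) :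
    ∃ b, letterCount w b < hi b := by
  rw [← sum_letterCount w] at hhi
  obtain ⟨b, -, hb⟩ := exists_lt_of_sum_lt hhi
  exact ⟨b, hb⟩

theorem sum_letterCount_update_sub_lt [DecidableEq ι] {w t : ι → A} {p : ι} {b : A}
    (hp : letterCount t (w p) < letterCount w (w p)) (hb : letterCount w b < letterCount t b) :
    ∑ a, (letterCount (update w p b) a - letterCount t a) <
      ∑ a, (letterCount w a - letterCount t a) := by
  have hcount := letterCount_update w p b
  refine sum_lt_sum (fun c _ => ?_) ⟨w p, mem_univ _, ?_⟩
  · have := hcount c; grind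
  · have := hcount (w p); grind

end LetterCount

section BoundedWords

variable {ι A : Type*} [Fintype ι] [DecidableEq A] {lo hi : A → ℕ}

/-- The words indexed by `ι` in which each letter `a` occurs at least `lo a` and at most `hi a`
times. -/
def boundedWords (ι : Type*) {A : Type*} [Fintype ι] [DecidableEq A] (lo hi : A → ℕ) :
    Set (ι → A) :=
  {w | ∀ a, lo a ≤ letterCount w a ∧ letterCount w a ≤ hi a}

theorem comp_perm_mem_boundedWords {w : ι → A} (hw : w ∈ boundedWords ι lo hi) (e : Perm ι) :
    w ∘ e ∈ boundedWords ι lo hi := by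
  intro a
  rw [letterCount_comp_perm]
  exact hw a

theorem bijOn_rotation_boundedWords (m : ℕ) :
    Set.BijOn (rotation A m) (boundedWords (Fin (m + 1)) lo hi) (boundedWords _ lo hi) :=
  (rotation A m).bijOn' (fun _ hw => comp_perm_mem_boundedWords hw _)
    fun _ hw => comp_perm_mem_boundedWords hw _

theorem boundedWords_nonempty [Fintype A] (hle : lo ≤ hi)
    (hlo : ∑ a, lo a ≤ Fintype.card ι) (hhi : Fintype.card ι ≤ ∑ a, hi a) :
    (boundedWords ι lo hi).Nonempty := by
  let tokens (c : A → ℕ) : Finset (Σ _ : A, ℕ) := univ.sigma fun a => range (c a)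
  have card_tokens (c : A → ℕ) : #(tokens c) = ∑ a, c a := by simp [tokens]
  have card_tokens_letter (c : A → ℕ) (a : A) : #{x ∈ tokens c | x.1 = a} = c a := by
    have : {x ∈ tokens c | x.1 = a} = (range (c a)).map (.sigmaMk a) := by
      ext ⟨b, i⟩
      simp only [tokens, mem_filter, mem_sigma, mem_map]
      grind
    rw [this, card_map, card_range]
  obtain ⟨T, hloT, hThi, hT⟩ := exists_subsuperset_card_eq (n := Fintype.card ι)
    (sigma_mono subset_rfl fun a => range_mono (hle a) : tokens lo ⊆ tokens hi)
    (by rwa [card_tokens]) (by rwa [card_tokens])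
  let e : T ≃ ι := Fintype.equivOfCardEq ((Fintype.card_coe T).trans hT)
  refine ⟨fun i => (e.symm i).1.1, fun a => ?_⟩
  have hcount : letterCount (fun i => (e.symm i).1.1) a = #{x ∈ T | x.1 = a} := by
    refine card_bij (fun i _ => (e.symm i).1) ?_ ?_ ?_
    · simp
    · simp
    · intro x hx
      rw [mem_filter] at hx
      exact ⟨e ⟨x, hx.1⟩, by simp [hx.2], by simp⟩
  rw [hcount, ← card_tokens_letter lo, ← card_tokens_letter hi]
  exact ⟨card_le_card (filter_subset_filter _ hloT), card_le_card (filter_subset_filter _ hThi)⟩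

variable {w : ι → A} {p q : ι}

section Swap

variable [DecidableEq ι]

theorem update_mem_boundedWords {b : A} (hw : w ∈ boundedWords ι lo hi)
    (hp : lo (w p) < letterCount w (w p)) (hb : letterCount w b < hi b) :
    update w p b ∈ boundedWords ι lo hi := by
  intro c
  have hcount := letterCount_update w p b c
  have hc := hw c
  split_ifs at hcount with hpc hbc hbc
  all_goals grind

theorem substConnected_comp_swap (hw : w ∈ boundedWords ι lo hi)
    (hp : lo (w p) < letterCount w (w p)) (hq : letterCount w (w q) < hi (w q)) :
    SubstConnected (boundedWords ι lo hi) w (w ∘ swap p q) :=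
  substConnected_comp_swap_of_update_mem hw (comp_perm_mem_boundedWords hw _)
    (update_mem_boundedWords hw hp hq)

theorem substConnected_comp_swap_of_lt_hi {h : ι} (hw : w ∈ boundedWords ι lo hi) (hne : w p ≠ w q)
    (hhp : h ≠ p) (hhq : h ≠ q) (hh : lo (w h) < letterCount w (w h))
    (hp : letterCount w (w p) < hi (w p)) (hq : letterCount w (w q) < hi (w q)) :
    SubstConnected (boundedWords ι lo hi) w (w ∘ swap p q) := by
  have hv := update_mem_boundedWords hw hh hp
  have hadj := substAdj_update hw hv
  have hcount := letterCount_update w h (w p)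
  set v := update w h (w p)
  have hvp : v p = w p := update_of_ne hhp.symm _ _
  have hvq : v q = w q := update_of_ne hhq.symm _ _
  have hswap : SubstConnected (boundedWords ι lo hi) v (v ∘ swap p q) := by
    apply substConnected_comp_swap hv
    · rw [hvp]
      have := hcount (w p); have := hw (w p); grind
    · rw [hvq]
      have := hcount (w q); grind
  have hadj' := hadj.comp_perm (swap p q) (comp_perm_mem_boundedWords hw _)
    (comp_perm_mem_boundedWords hv _)
  calc SubstConnected (boundedWords ι lo hi) w v := .rel _ _ hadj
    SubstConnected _ _ (v ∘ swap p q) := hswap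
    SubstConnected _ _ (w ∘ swap p q) := .symm _ _ (.rel _ _ hadj')

theorem substConnected_comp_swap_of_lo_lt {b : A} (hw : w ∈ boundedWords ι lo hi)
    (hne : w p ≠ w q) (hb : letterCount w b < hi b)
    (hp : lo (w p) < letterCount w (w p)) (hq : lo (w q) < letterCount w (w q)) :
    SubstConnected (boundedWords ι lo hi) w (w ∘ swap p q) := by
  have hpq : p ≠ q := fun h => hne (congrArg w h)
  have hu := update_mem_boundedWords hw hp hb
  have hcount := letterCount_update w p b
  have hwu := substAdj_update hw hu
  set u := update w p b with hu_def
  have huq : u q = w q := update_of_ne hpq.symm _ _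
  have hv : update u q (w p) ∈ boundedWords ι lo hi := by
    apply update_mem_boundedWords hu
    · rw [huq]
      have := hcount (w q); grind
    · have := hcount (w p); have := hw (w p); grind
  have huv := substAdj_update hu hv
  have hvw : SubstAdj (boundedWords ι lo hi) (update u q (w p)) (w ∘ swap p q) := by
    refine ⟨hv, comp_perm_mem_boundedWords hw _, p, fun i hip => ?_⟩
    rcases eq_or_ne i q with rfl | hiq
    · simp
    · simp [hu_def, hip, hiq, swap_apply_of_ne_of_ne hip hiq]
  calc SubstConnected (boundedWords ι lo hi) w u := .rel _ _ hwu
    SubstConnected _ _ (update u q (w p)) := .rel _ _ huv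
    SubstConnected _ _ (w ∘ swap p q) := .rel _ _ hvw

end Swap

section Connectivity

variable [Fintype A]

theorem substConnected_comp_swap_boundedWords [DecidableEq ι] (hlt : ∀ a, lo a < hi a)
    (hlo : ∑ a, lo a < Fintype.card ι) (hhi : Fintype.card ι < ∑ a, hi a)
    (hw : w ∈ boundedWords ι lo hi) (p q : ι) :
    SubstConnected (boundedWords ι lo hi) w (w ∘ swap p q) := by
  by_cases hne : w p = w q
  · rw [comp_swap_eq_update, hne, update_eq_self, ← hne, update_eq_self]
    exact .refl w
  obtain ⟨h, hh⟩ := exists_lo_lt_letterCount hlo w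
  obtain ⟨b, hb⟩ := exists_letterCount_lt_hi hhi w
  by_cases hpq : lo (w p) < letterCount w (w p) ∧ letterCount w (w q) < hi (w q)
  · exact substConnected_comp_swap hw hpq.1 hpq.2
  by_cases hqp : lo (w q) < letterCount w (w q) ∧ letterCount w (w p) < hi (w p)
  · rw [swap_comm]
    exact substConnected_comp_swap hw hqp.1 hqp.2
  have := hlt (w p)
  have := hlt (w q)
  rcases lt_or_ge (lo (w p)) (letterCount w (w p)) with hp | hp
  · exact substConnected_comp_swap_of_lo_lt hw hne hb hp (by omega)
  · refine substConnected_comp_swap_of_lt_hi hw hne ?_ ?_ hh (by omega) (by omega)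
    all_goals rintro rfl; omega

theorem substConnected_comp_perm (hlt : ∀ a, lo a < hi a)
    (hlo : ∑ a, lo a < Fintype.card ι) (hhi : Fintype.card ι < ∑ a, hi a)
    (hw : w ∈ boundedWords ι lo hi) (e : Perm ι) :
    SubstConnected (boundedWords ι lo hi) w (w ∘ e) := by
  classical
  induction e using Perm.swap_induction_on' with
  | one => exact .refl w
  | mul_swap e p q _ ih =>
    exact ih.trans _ _ _ (substConnected_comp_swap_boundedWords hlt hlo hhi
      (comp_perm_mem_boundedWords hw e) p q)

theorem substConnected_boundedWords {t : ι → A} (hlt : ∀ a, lo a < hi a)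
    (hlo : ∑ a, lo a < Fintype.card ι) (hhi : Fintype.card ι < ∑ a, hi a)
    (hw : w ∈ boundedWords ι lo hi) (ht : t ∈ boundedWords ι lo hi) :
    SubstConnected (boundedWords ι lo hi) w t := by
  classical
  induction hexcess : ∑ a, (letterCount w a - letterCount t a) using Nat.strong_induction_on
    generalizing w with | h _ ih
  by_cases hwt : letterCount t = letterCount w
  · obtain ⟨e, rfl⟩ := exists_perm_of_letterCount_eq hwt
    exact substConnected_comp_perm hlt hlo hhi hw e
  obtain ⟨a, ha⟩ := exists_letterCount_lt_of_ne hwt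
  obtain ⟨b, hb⟩ := exists_letterCount_lt_of_ne (Ne.symm hwt)
  obtain ⟨p, rfl⟩ := letterCount_pos_iff.1 (Nat.zero_lt_of_lt ha)
  have hv : update w p b ∈ boundedWords ι lo hi :=
    update_mem_boundedWords hw ((ht (w p)).1.trans_lt ha) (hb.trans_le (ht b).2)
  exact .trans _ _ _ (.rel _ _ (substAdj_update hw hv))
    (ih _ (hexcess ▸ sum_letterCount_update_sub_lt ha hb) hv rfl)

end Connectivity

end BoundedWords

end UniversalCycle

open UniversalCycle in
theorem ucycle_one_two_augmented_onto_general {A : Type*} [Fintype A] [DecidableEq A] {k : ℕ}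
    {lo hi : A → ℕ} (hlt : ∀ a, lo a < hi a) (hlo : ∑ a, lo a < k) (hhi : k < ∑ a, hi a) :
    HasUCycle (wordsOf fun w : Fin k → A => w ∈ boundedWords (Fin k) lo hi) := by
  obtain ⟨m, rfl⟩ : ∃ m, k = m + 1 := Nat.exists_eq_succ_of_ne_zero hlo.ne_bot
  rw [← Fintype.card_fin (m + 1)] at hlo hhi
  apply hasUCycle_of_substConnected
  all_goals simp only [← Finset.mem_coe, ← Finset.coe_nonempty, coe_wordsOf_mem]
  · exact boundedWords_nonempty (fun a => (hlt a).le) hlo.le hhi.le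
  · exact bijOn_rotation_boundedWords m
  · exact fun u hu v hv => substConnected_boundedWords hlt hlo hhi hu hv

/-- U-cycles of `1-2` augmented onto words of length `k` over `Fin n` (each letter
occurring at least once and at most twice) exist for all `n ≥ 2` and
`n + 1 ≤ k ≤ 2n - 1`. -/
theorem ucycle_one_two_augmented_onto (n k : ℕ) (hn : 2 ≤ n)
    (h1 : n + 1 ≤ k) (h2 : k ≤ 2 * n - 1) :
    HasUCycle (wordsOf (fun w : Fin k → Fin n =>
      ∀ a : Fin n, 1 ≤ (Finset.univ.filter fun i => w i = a).card ∧
        (Finset.univ.filter fun i => w i = a).card ≤ 2)) :=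
  ucycle_one_two_augmented_onto_general (lo := fun _ => 1) (hi := fun _ => 2)
    (fun _ => Nat.one_lt_two) (by simpa using h1) (by simp; omega)
end

section
/- Let a, b, n, k be integers with 1 ≤ a < b, n ≥ 1, and a·n + 1 ≤ k ≤ b·n − 1. Then there exists a universal cycle for the set of a-b augmented onto words of length k over Fin n, i.e., words w : Fin k → Fin n in which every letter a' ∈ Fin n occurs at least a times and at most b times. -/
/-!
Among the permutations of a rotation-invariant set `S` of words that send each word to one
overlapping it (the last `k` letters of `w` are the first `k` letters of `σ w`), choose one whose
cycles are maximal. Composing it with the transposition of two words that agree after their first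
letter would merge their cycles, so such words already share a cycle; rotating, so do any two words
that differ in a single letter. Hence `S` has a universal cycle as soon as it is connected under
one-letter changes. For words with prescribed bounds on the number of occurrences of each letter,
one-letter changes realise every transposition of positions (there is always a letter with slack in
each direction), hence every permutation of positions, and can also move the vector of letter counts
to any other admissible one.
-/

open Function Finset

section PermCycles

open Equiv Equiv.Perm

variable {α : Type*} {σ τ : Perm α} {x y : α}

theorem sameCycle_le_of_forall_sameCycle_apply (h : ∀ x, τ.SameCycle x (σ x)) :
    σ.SameCycle ≤ τ.SameCycle := by
  rintro x _ ⟨m, rfl⟩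
  induction m using Int.induction_on with
  | zero => exact .refl _ _
  | succ m ih =>
    rw [add_comm, zpow_one_add, Perm.mul_apply]
    exact ih.trans (h _)
  | pred m ih =>
    refine ih.trans (SameCycle.symm ?_)
    simpa [← Perm.mul_apply, ← zpow_one_add] using h ((σ ^ (-(m : ℤ) - 1)) x)

theorem mul_swap_apply_of_ne_of_ne [DecidableEq α] {z : α} (hx : z ≠ x) (hy : z ≠ y) :
    (σ * swap x y) z = σ z := by
  rw [Perm.mul_apply, swap_apply_of_ne_of_ne hx hy]

theorem sameCycle_mul_swap_of_not_sameCycle [Finite α] [DecidableEq α] (h : ¬ σ.SameCycle x y) :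
    (σ * swap x y).SameCycle x y := by
  by_contra hxy
  -- From `x`, the new permutation jumps to `σ y` and then follows the old cycle of `y` up to `y`.
  have orbit (m : ℕ) : (σ * swap x y).SameCycle x ((σ ^ (m + 1)) y) := by
    induction m with
    | zero => exact ⟨1, by simp⟩
    | succ m ih =>
      have hx : (σ ^ (m + 1)) y ≠ x := fun he =>
        h (SameCycle.symm ⟨(m + 1 : ℕ), by rwa [zpow_natCast]⟩)
      have hy : (σ ^ (m + 1)) y ≠ y := fun he => hxy (by rwa [he] at ih)
      rw [pow_succ', Perm.mul_apply, ← mul_swap_apply_of_ne_of_ne hx hy]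
      exact sameCycle_apply_right.2 ih
  have hy := orbit (orderOf σ - 1)
  rw [Nat.sub_add_cancel (orderOf_pos σ), pow_orderOf_eq_one] at hy
  exact hxy hy

theorem sameCycle_le_sameCycle_mul_swap [Finite α] [DecidableEq α] (h : ¬ σ.SameCycle x y) :
    σ.SameCycle ≤ (σ * swap x y).SameCycle := by
  have hxy := sameCycle_mul_swap_of_not_sameCycle h
  refine sameCycle_le_of_forall_sameCycle_apply fun z => ?_
  rcases eq_or_ne z x with rfl | hx
  · simpa using sameCycle_apply_right.2 hxy
  rcases eq_or_ne z y with rfl | hy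
  · simpa using sameCycle_apply_right.2 hxy.symm
  rw [← mul_swap_apply_of_ne_of_ne hx hy]
  exact sameCycle_apply_right.2 (.refl _ _)

section SingleCycle

variable [Fintype α] {N : ℕ}

theorem pow_apply_eq_pow_apply_iff_natCast_eq (hσ : ∀ x y, σ.SameCycle x y)
    (hN : Fintype.card α = N) (x : α) (p q : ℕ) :
    (σ ^ p) x = (σ ^ q) x ↔ (p : ZMod N) = q := by
  have hcyc : σ.IsCycleOn (univ : Finset α) := ⟨by simp, fun x _ y _ => hσ x y⟩
  rw [hcyc.pow_apply_eq_pow_apply (mem_univ x), card_univ, hN, ZMod.natCast_eq_natCast_iff]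

theorem pow_val_natCast_apply [NeZero N] (hσ : ∀ x y, σ.SameCycle x y)
    (hN : Fintype.card α = N) (x : α) (m : ℕ) : (σ ^ (m : ZMod N).val) x = (σ ^ m) x := by
  rw [pow_apply_eq_pow_apply_iff_natCast_eq hσ hN, ZMod.natCast_zmod_val]

theorem bijective_pow_val_apply [NeZero N] (hσ : ∀ x y, σ.SameCycle x y)
    (hN : Fintype.card α = N) (x : α) : Bijective fun i : ZMod N => (σ ^ i.val) x := by
  refine ⟨fun i j hij => ?_, fun y => ?_⟩
  · simpa [pow_apply_eq_pow_apply_iff_natCast_eq hσ hN] using hij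
  · obtain ⟨m, rfl⟩ := (hσ x y).exists_nat_pow_eq
    exact ⟨m, pow_val_natCast_apply hσ hN x m⟩

end SingleCycle

end PermCycles

section ShiftPerm

open Equiv

variable {A : Type*} {k : ℕ} {S : Finset (Fin (k + 1) → A)}

/-- A choice, for each word of `S`, of a successor in a universal cycle: `σ w` starts with the last
`k` letters of `w`. If `σ` is a single cycle, it spells out a universal cycle. -/
def IsShiftPerm (σ : Perm S) : Prop :=
  ∀ w, Fin.init (σ w).1 = Fin.tail w.1

namespace IsShiftPerm

variable {σ : Perm S}

theorem pow_apply_zero (hσ : IsShiftPerm σ) (w : S) (j : Fin (k + 1)) :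
    ((σ ^ j.val) w).1 0 = w.1 j := by
  induction j using Fin.induction generalizing w with
  | zero => rfl
  | succ j ih =>
    rw [Fin.val_succ, pow_succ, Perm.mul_apply, ← Fin.val_castSucc, ih]
    exact congrFun (hσ w) j

theorem hasUCycle (hσ : IsShiftPerm σ) (hne : S.Nonempty) (hcyc : ∀ w v, σ.SameCycle w v) :
    HasUCycle S := by
  obtain ⟨w₀⟩ : Nonempty S := hne.to_subtype
  have : NeZero S.card := ⟨hne.card_ne_zero⟩
  refine ⟨fun i => ((σ ^ i.val) w₀).1 0, ?_⟩
  have window (i : ZMod S.card) (j : Fin (k + 1)) :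
      ((σ ^ (i + (j.val : ZMod S.card)).val) w₀).1 0 = ((σ ^ i.val) w₀).1 j := by
    have hij : i + (j.val : ZMod S.card) = ((j.val + i.val : ℕ) : ZMod S.card) := by
      simp [add_comm]
    rw [hij, pow_val_natCast_apply hcyc (Fintype.card_coe S), pow_add, Perm.mul_apply,
      hσ.pow_apply_zero]
  simp only [window]
  have hbij := bijective_pow_val_apply hcyc (Fintype.card_coe S) w₀
  refine ⟨fun i _ => ((σ ^ i.val) w₀).2, (Subtype.val_injective.comp hbij.1).injOn, fun w hw => ?_⟩
  obtain ⟨i, hi⟩ := hbij.2 ⟨w, hw⟩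
  exact ⟨i, trivial, congrArg Subtype.val hi⟩

theorem mul_swap [DecidableEq S] (hσ : IsShiftPerm σ) {w v : S}
    (h : Fin.tail w.1 = Fin.tail v.1) : IsShiftPerm (σ * swap w v) := by
  intro u
  rw [Perm.mul_apply, hσ, swap_apply_def]
  split_ifs with hw hv
  · rw [hw, h]
  · rw [hv, h]
  · rfl

theorem exists_sameCycle_of_tail_eq (hσ : IsShiftPerm σ) :
    ∃ τ : Perm S, IsShiftPerm τ ∧
      ∀ w v : S, Fin.tail w.1 = Fin.tail v.1 → τ.SameCycle w v := by
  classical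
  obtain ⟨τ, hτ, hmax⟩ := Set.Finite.exists_maximalFor (fun τ : Perm S => τ.SameCycle)
    {τ | IsShiftPerm τ} (Set.toFinite _) ⟨σ, hσ⟩
  refine ⟨τ, hτ, fun w v h => ?_⟩
  by_contra hwv
  exact hwv (hmax (hτ.mul_swap h) (sameCycle_le_sameCycle_mul_swap hwv) w v
    (sameCycle_mul_swap_of_not_sameCycle hwv))

theorem sameCycle_apply_of_tail_eq (hσ : IsShiftPerm σ)
    (htail : ∀ w v : S, Fin.tail w.1 = Fin.tail v.1 → σ.SameCycle w v) {ρ : Perm S}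
    (hρ : IsShiftPerm ρ) (w : S) : σ.SameCycle w (ρ w) := by
  obtain ⟨v, hv⟩ := σ.surjective (ρ w)
  have hwv : Fin.tail w.1 = Fin.tail v.1 := by rw [← hσ v, hv, hρ]
  rw [← hv]
  exact Perm.sameCycle_apply_right.2 (htail w v hwv)

end IsShiftPerm

/-- The rotation `w₀ w₁ … wₖ ↦ w₁ … wₖ w₀`, as a permutation of a rotation-invariant set. -/
def rotatePerm (hS : ∀ w, w ∘ finRotate (k + 1) ∈ S ↔ w ∈ S) : Perm S :=
  Perm.subtypePerm ((finRotate (k + 1)).symm.arrowCongr (Equiv.refl A)) hS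

theorem coe_rotatePerm_apply (hS : ∀ w, w ∘ finRotate (k + 1) ∈ S ↔ w ∈ S) (w : S) :
    (rotatePerm hS w).1 = w.1 ∘ finRotate (k + 1) :=
  rfl

theorem isShiftPerm_rotatePerm (hS : ∀ w, w ∘ finRotate (k + 1) ∈ S ↔ w ∈ S) :
    IsShiftPerm (rotatePerm hS) := by
  intro w
  funext j
  simp [Fin.init, Fin.tail, coe_rotatePerm_apply]

theorem sameCycle_of_eqOn_compl_singleton (hS : ∀ w, w ∘ finRotate (k + 1) ∈ S ↔ w ∈ S)
    {σ : Perm S} (hσ : IsShiftPerm σ)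
    (htail : ∀ w v : S, Fin.tail w.1 = Fin.tail v.1 → σ.SameCycle w v) (i : Fin (k + 1)) (w v : S)
    (h : Set.EqOn w.1 v.1 {i}ᶜ) : σ.SameCycle w v := by
  induction i using Fin.induction generalizing w v with
  | zero => exact htail w v (funext fun j => h (Fin.succ_ne_zero j))
  | succ i ih =>
    have hrot := hσ.sameCycle_apply_of_tail_eq htail (isShiftPerm_rotatePerm hS)
    refine (hrot w).trans (.trans (ih _ _ fun j hj => ?_) (hrot v).symm)
    rw [coe_rotatePerm_apply, coe_rotatePerm_apply]
    apply h
    simpa [← Fin.coeSucc_eq_succ] using hj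

end ShiftPerm

section OneLetterStep

variable {ι A : Type*} [DecidableEq ι]

/-- A move between words that changes at most one letter and ends in `S`. Only the target is
required to lie in `S`, so a chain of moves stays in `S` exactly when it starts there. -/
def OneLetterStep (S : Set (ι → A)) (w v : ι → A) : Prop :=
  v ∈ S ∧ ∃ i y, update w i y = v

/-- `v` can be reached from `w` by one-letter changes that stay in `S`. -/
abbrev OneLetterReachable (S : Set (ι → A)) : (ι → A) → (ι → A) → Prop :=
  Relation.ReflTransGen (OneLetterStep S)

theorem hasUCycle_of_oneLetterReachable {k : ℕ} {S : Finset (Fin (k + 1) → A)}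
    (hne : S.Nonempty) (hrot : ∀ w, w ∘ finRotate (k + 1) ∈ S ↔ w ∈ S)
    (hconn : ∀ w ∈ S, ∀ v ∈ S, OneLetterReachable (S : Set (Fin (k + 1) → A)) w v) :
    HasUCycle S := by
  obtain ⟨σ, hσ, htail⟩ := (isShiftPerm_rotatePerm hrot).exists_sameCycle_of_tail_eq
  refine hσ.hasUCycle hne fun w v => ?_
  obtain ⟨v, hv⟩ := v
  have hwv := hconn w.1 w.2 v hv
  suffices ∃ hv : v ∈ S, σ.SameCycle w ⟨v, hv⟩ from this.2
  clear hv
  induction hwv with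
  | refl => exact ⟨w.2, .refl _ _⟩
  | tail _ hstep ih =>
    obtain ⟨hu, i, y, rfl⟩ := hstep
    obtain ⟨_, hw⟩ := ih
    exact ⟨hu, hw.trans (sameCycle_of_eqOn_compl_singleton hrot hσ htail i _ _
      fun j hj => (update_of_ne hj _ _).symm)⟩

end OneLetterStep

section LetterCount

variable {ι A : Type*} [Fintype ι] [DecidableEq A]

/-- The number of occurrences of the letter `x` in the word `w`. -/
def letterCount (w : ι → A) (x : A) : ℕ :=
  #{i | w i = x}

theorem sum_letterCount [Fintype A] (w : ι → A) : ∑ x, letterCount w x = Fintype.card ι :=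
  (card_eq_sum_card_fiberwise fun _ _ => mem_coe.2 (mem_univ _)).symm

theorem exists_apply_eq_of_letterCount_pos {w : ι → A} {x : A} (h : 0 < letterCount w x) :
    ∃ i, w i = x := by
  simpa [letterCount, card_pos, Finset.Nonempty] using h

theorem letterCount_comp_equiv {κ : Type*} [Fintype κ] (w : ι → A) (e : κ ≃ ι) (x : A) :
    letterCount (w ∘ e) x = letterCount w x := by
  simp only [letterCount, card_filter]
  exact e.sum_comp fun i => if w i = x then 1 else 0

theorem exists_perm_comp_eq_of_letterCount_eq {w v : ι → A} (h : letterCount w = letterCount v) :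
    ∃ π : Equiv.Perm ι, w ∘ π = v := by
  have fiberEquiv (x : A) : Nonempty ({i // v i = x} ≃ {i // w i = x}) := by
    rw [← Fintype.card_eq, Fintype.card_subtype, Fintype.card_subtype]
    exact (congrFun h x).symm
  exact ⟨Equiv.ofFiberEquiv fun x => (fiberEquiv x).some,
    funext (Equiv.ofFiberEquiv_map fun x => (fiberEquiv x).some)⟩

theorem exists_letterCount_eq [Fintype A] {c : A → ℕ} (h : ∑ x, c x = Fintype.card ι) :
    ∃ w : ι → A, letterCount w = c := by
  have e : ι ≃ Σ x, Fin (c x) := Fintype.equivOfCardEq (by simp [h])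
  refine ⟨Sigma.fst ∘ e, funext fun x => ?_⟩
  rw [letterCount_comp_equiv, letterCount, card_filter, Fintype.sum_sigma,
    Fintype.sum_eq_single x fun z hz => by simp [hz]]
  simp

theorem exists_lt_letterCount [Fintype A] {c : A → ℕ} (h : ∑ x, c x < Fintype.card ι)
    (w : ι → A) : ∃ x, c x < letterCount w x := by
  rw [← sum_letterCount w] at h
  simpa using exists_lt_of_sum_lt h

theorem exists_letterCount_lt [Fintype A] {c : A → ℕ} (h : Fintype.card ι < ∑ x, c x)
    (w : ι → A) : ∃ x, letterCount w x < c x := by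
  rw [← sum_letterCount w] at h
  simpa using exists_lt_of_sum_lt h

theorem exists_letterCount_lt_of_ne [Finite A] {w v : ι → A}
    (h : letterCount w ≠ letterCount v) : ∃ x, letterCount w x < letterCount v x := by
  cases nonempty_fintype A
  by_contra! hle
  have hsum : ∑ x, letterCount v x = ∑ x, letterCount w x := by simp only [sum_letterCount]
  exact h (funext fun x => ((sum_eq_sum_iff_of_le fun x _ => hle x).1 hsum x (mem_univ x)).symm)

variable [DecidableEq ι]

theorem letterCount_update_add (w : ι → A) (i : ι) (y z : A) :
    letterCount (update w i y) z + (if w i = z then 1 else 0) =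
      letterCount w z + (if y = z then 1 else 0) := by
  let indicator : A → ℕ := fun x => if x = z then 1 else 0
  have count_eq (v : ι → A) : letterCount v z = ∑ j, (indicator ∘ v) j := card_filter ..
  rw [count_eq, count_eq, comp_update, sum_update_of_mem (mem_univ i),
    sum_eq_add_sum_sdiff_singleton_of_mem (mem_univ i)]
  simp only [indicator, comp_apply]
  ring

end LetterCount

theorem exists_sum_eq_of_le_of_le {α : Type*} [Fintype α] {f g : α → ℕ} {m : ℕ} (hfg : f ≤ g)
    (hf : ∑ x, f x ≤ m) (hg : m ≤ ∑ x, g x) :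
    ∃ c : α → ℕ, f ≤ c ∧ c ≤ g ∧ ∑ x, c x = m := by
  classical
  induction m, hf using Nat.le_induction with
  | base => exact ⟨f, le_rfl, hfg, rfl⟩
  | succ m _ ih =>
    obtain ⟨c, hfc, hcg, rfl⟩ := ih (Nat.le_of_succ_le hg)
    obtain ⟨x, -, hx⟩ := exists_lt_of_sum_lt (Nat.lt_of_succ_le hg)
    refine ⟨c + Pi.single x 1, le_add_right hfc, fun z => ?_, by simp [sum_add_distrib]⟩
    rcases eq_or_ne z x with rfl | hz
    · simpa using hx
    · simpa [hz] using hcg z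

section BoundedWords

variable {ι A : Type*} [Fintype ι] [DecidableEq A] {lo hi : A → ℕ} {w v : ι → A}

/-- The words in which each letter `x` occurs at least `lo x` and at most `hi x` times. The
`a`-`b` augmented onto words are the case of constant bounds. -/
def boundedWords (ι : Type*) [Fintype ι] (lo hi : A → ℕ) : Set (ι → A) :=
  {w | ∀ x, lo x ≤ letterCount w x ∧ letterCount w x ≤ hi x}

theorem comp_perm_mem_boundedWords_iff (π : Equiv.Perm ι) :
    w ∘ π ∈ boundedWords ι lo hi ↔ w ∈ boundedWords ι lo hi := by
  simp only [boundedWords, Set.mem_ofPred_eq, letterCount_comp_equiv]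

theorem nonempty_boundedWords [Fintype A] (hle : lo ≤ hi) (hlo : ∑ x, lo x ≤ Fintype.card ι)
    (hhi : Fintype.card ι ≤ ∑ x, hi x) : (boundedWords ι lo hi).Nonempty := by
  obtain ⟨c, hloc, hchi, hsum⟩ := exists_sum_eq_of_le_of_le hle hlo hhi
  obtain ⟨w, rfl⟩ := exists_letterCount_eq hsum
  exact ⟨w, fun x => ⟨hloc x, hchi x⟩⟩

variable [DecidableEq ι]

theorem update_mem_boundedWords (hw : w ∈ boundedWords ι lo hi) {i : ι} {y : A}
    (hlose : lo (w i) < letterCount w (w i)) (hgain : letterCount w y < hi y) :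
    update w i y ∈ boundedWords ι lo hi := by
  intro z
  have := letterCount_update_add w i y z
  have := hw z
  grind

-- Truncated subtraction: the sum is the total deficit of `w` with respect to `v`.
theorem sum_letterCount_sub_update_lt [Fintype A] {i : ι} {y : A}
    (hexcess : letterCount v (w i) < letterCount w (w i))
    (hdeficit : letterCount w y < letterCount v y) :
    ∑ z, (letterCount v z - letterCount (update w i y) z) <
      ∑ z, (letterCount v z - letterCount w z) := by
  have hupdate := letterCount_update_add w i y
  refine sum_lt_sum (fun z _ => ?_) ⟨y, mem_univ y, ?_⟩
  · grind
  · grind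

theorem exists_oneLetterReachable_letterCount_eq [Finite A] (hw : w ∈ boundedWords ι lo hi)
    (hv : v ∈ boundedWords ι lo hi) :
    ∃ u ∈ boundedWords ι lo hi, letterCount u = letterCount v ∧
      OneLetterReachable (boundedWords ι lo hi) w u := by
  cases nonempty_fintype A
  induction hd : ∑ z, (letterCount v z - letterCount w z) using Nat.strong_induction_on
    generalizing w with
  | _ d ih =>
    by_cases heq : letterCount w = letterCount v
    · exact ⟨w, hw, heq, .refl⟩
    obtain ⟨x, hx⟩ := exists_letterCount_lt_of_ne (Ne.symm heq)
    obtain ⟨y, hy⟩ := exists_letterCount_lt_of_ne heq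
    obtain ⟨i, rfl⟩ := exists_apply_eq_of_letterCount_pos (Nat.zero_lt_of_lt hx)
    have hstep : update w i y ∈ boundedWords ι lo hi :=
      update_mem_boundedWords hw ((hv _).1.trans_lt hx) (hy.trans_le (hv y).2)
    obtain ⟨u, hu, hcount, hreach⟩ :=
      ih _ (hd ▸ sum_letterCount_sub_update_lt hx hy) hstep rfl
    exact ⟨u, hu, hcount, .head ⟨hstep, i, y, rfl⟩ hreach⟩

theorem oneLetterReachable_comp_swap_of_slack (hw : w ∈ boundedWords ι lo hi) {i j : ι}
    (hlose : lo (w i) < letterCount w (w i)) (hgain : letterCount w (w j) < hi (w j)) :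
    OneLetterReachable (boundedWords ι lo hi) w (w ∘ Equiv.swap i j) := by
  refine .head ⟨update_mem_boundedWords hw hlose hgain, i, w j, rfl⟩
    (.single ⟨(comp_perm_mem_boundedWords_iff _).2 hw, j, w i, ?_⟩)
  rw [Equiv.swap_comm, Equiv.comp_swap_eq_update]

variable [Fintype A]

theorem oneLetterReachable_comp_swap_of_eq_lo (hlt : ∀ x, lo x < hi x)
    (hlo : ∑ x, lo x < Fintype.card ι) (hw : w ∈ boundedWords ι lo hi) {i j : ι}
    (hij : w i ≠ w j) (hi_lo : letterCount w (w i) = lo (w i))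
    (hj_lo : letterCount w (w j) = lo (w j)) :
    OneLetterReachable (boundedWords ι lo hi) w (w ∘ Equiv.swap i j) := by
  -- The letter `x`, with occurrences to spare, lends one of them to `w i` during the swap.
  obtain ⟨x, hx⟩ := exists_lt_letterCount hlo w
  obtain ⟨l, rfl⟩ := exists_apply_eq_of_letterCount_pos (Nat.zero_lt_of_lt hx)
  have hil : w i ≠ w l := fun h => by rw [← h] at hx; omega
  have hjl : w j ≠ w l := fun h => by rw [← h] at hx; omega
  set u := update w l (w i)
  have hu : u ∈ boundedWords ι lo hi := update_mem_boundedWords hw hx (hi_lo ▸ hlt _)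
  have hui : u i = w i := update_of_ne (ne_of_apply_ne w hil) _ _
  have huj : u j = w j := update_of_ne (ne_of_apply_ne w hjl) _ _
  have hlose : lo (u i) < letterCount u (u i) := by
    have := letterCount_update_add w l (w i) (w i)
    grind
  have hgain : letterCount u (u j) < hi (u j) := by
    have := letterCount_update_add w l (w i) (w j)
    have := hlt (w j)
    grind
  refine .head ⟨hu, l, w i, rfl⟩ (.tail (oneLetterReachable_comp_swap_of_slack hu hlose hgain)
    ⟨(comp_perm_mem_boundedWords_iff _).2 hw, l, w l, ?_⟩)
  rw [Equiv.comp_swap_eq_update, Equiv.comp_swap_eq_update]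
  grind

theorem oneLetterReachable_comp_swap_of_eq_hi (hlt : ∀ x, lo x < hi x)
    (hhi : Fintype.card ι < ∑ x, hi x) (hw : w ∈ boundedWords ι lo hi) {i j : ι}
    (hij : i ≠ j) (hi_hi : letterCount w (w i) = hi (w i))
    (hj_hi : letterCount w (w j) = hi (w j)) :
    OneLetterReachable (boundedWords ι lo hi) w (w ∘ Equiv.swap i j) := by
  -- The letter `x`, with room to spare, stands in at position `i` during the swap.
  obtain ⟨x, hx⟩ := exists_letterCount_lt hhi w
  have hw' : w ∘ Equiv.swap i j ∈ boundedWords ι lo hi := (comp_perm_mem_boundedWords_iff _).2 hw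
  have hu : update w i x ∈ boundedWords ι lo hi := update_mem_boundedWords hw (hi_hi ▸ hlt _) hx
  have hu' : update (w ∘ Equiv.swap i j) i x ∈ boundedWords ι lo hi := by
    apply update_mem_boundedWords hw' <;> rw [letterCount_comp_equiv]
    · simpa [hj_hi] using hlt (w j)
    · exact hx
  refine .head ⟨hu, i, x, rfl⟩ (.head ⟨hu', j, w i, ?_⟩ (.single ⟨hw', i, w j, ?_⟩))
  · rw [Equiv.comp_swap_eq_update]
    grind
  · rw [Equiv.comp_swap_eq_update]
    grind

theorem oneLetterReachable_comp_swap (hlt : ∀ x, lo x < hi x) (hlo : ∑ x, lo x < Fintype.card ι)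
    (hhi : Fintype.card ι < ∑ x, hi x) (hw : w ∈ boundedWords ι lo hi) (i j : ι) :
    OneLetterReachable (boundedWords ι lo hi) w (w ∘ Equiv.swap i j) := by
  by_cases hij : w i = w j
  · rw [Equiv.comp_swap_eq_update, hij, update_eq_self, ← hij, update_eq_self]
  by_cases slack_ij : lo (w i) < letterCount w (w i) ∧ letterCount w (w j) < hi (w j)
  · exact oneLetterReachable_comp_swap_of_slack hw slack_ij.1 slack_ij.2
  by_cases slack_ji : lo (w j) < letterCount w (w j) ∧ letterCount w (w i) < hi (w i)
  · rw [Equiv.swap_comm]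
    exact oneLetterReachable_comp_swap_of_slack hw slack_ji.1 slack_ji.2
  have hi_bounds := hw (w i)
  have hj_bounds := hw (w j)
  have hi_lt := hlt (w i)
  have hj_lt := hlt (w j)
  by_cases hi_lo : letterCount w (w i) = lo (w i)
  · exact oneLetterReachable_comp_swap_of_eq_lo hlt hlo hw hij hi_lo (by omega)
  · exact oneLetterReachable_comp_swap_of_eq_hi hlt hhi hw (ne_of_apply_ne w hij) (by omega)
      (by omega)

theorem oneLetterReachable_comp_perm (hlt : ∀ x, lo x < hi x) (hlo : ∑ x, lo x < Fintype.card ι)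
    (hhi : Fintype.card ι < ∑ x, hi x) (hw : w ∈ boundedWords ι lo hi) (π : Equiv.Perm ι) :
    OneLetterReachable (boundedWords ι lo hi) w (w ∘ π) := by
  induction π using Equiv.Perm.swap_induction_on' with
  | one => exact .refl
  | mul_swap π i j _ ih =>
    have hwπ : w ∘ π ∈ boundedWords ι lo hi := (comp_perm_mem_boundedWords_iff π).2 hw
    exact ih.trans (oneLetterReachable_comp_swap hlt hlo hhi hwπ i j)

theorem oneLetterReachable_of_mem_boundedWords (hlt : ∀ x, lo x < hi x)
    (hlo : ∑ x, lo x < Fintype.card ι) (hhi : Fintype.card ι < ∑ x, hi x)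
    (hw : w ∈ boundedWords ι lo hi) (hv : v ∈ boundedWords ι lo hi) :
    OneLetterReachable (boundedWords ι lo hi) w v := by
  obtain ⟨u, hu, hcount, hwu⟩ := exists_oneLetterReachable_letterCount_eq hw hv
  obtain ⟨π, rfl⟩ := exists_perm_comp_eq_of_letterCount_eq hcount
  exact hwu.trans (oneLetterReachable_comp_perm hlt hlo hhi hu π)

end BoundedWords

theorem ucycle_ab_augmented_onto_general {A : Type*} [Fintype A] [DecidableEq A] {k : ℕ}
    (lo hi : A → ℕ) (hlt : ∀ x, lo x < hi x) (hlo : ∑ x, lo x < k) (hhi : k < ∑ x, hi x) :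
    HasUCycle (wordsOf (fun w : Fin k → A =>
      ∀ x : A, lo x ≤ (Finset.univ.filter fun i => w i = x).card ∧
        (Finset.univ.filter fun i => w i = x).card ≤ hi x)) := by
  obtain ⟨k, rfl⟩ := Nat.exists_eq_add_one_of_ne_zero (Nat.ne_zero_of_lt hlo)
  rw [← Fintype.card_fin (k + 1)] at hlo hhi
  have hcoe : (wordsOf (fun w : Fin (k + 1) → A => w ∈ boundedWords (Fin (k + 1)) lo hi) : Set _) =
      boundedWords (Fin (k + 1)) lo hi := by
    simp [wordsOf]
  have hmem (w) : w ∈ wordsOf _ ↔ w ∈ boundedWords (Fin (k + 1)) lo hi := Set.ext_iff.1 hcoe w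
  refine hasUCycle_of_oneLetterReachable ?_ (fun w => ?_) (fun w hw v hv => ?_)
  · exact coe_nonempty.1 (hcoe ▸ nonempty_boundedWords (fun x => (hlt x).le) hlo.le hhi.le)
  · exact (hmem _).trans ((comp_perm_mem_boundedWords_iff _).trans (hmem w).symm)
  · exact hcoe ▸ oneLetterReachable_of_mem_boundedWords hlt hlo hhi ((hmem w).1 hw) ((hmem v).1 hv)

/-- U-cycles of `a-b` augmented onto words of length `k` over `Fin n` (each letter
occurring at least `a` and at most `b` times) exist whenever `1 ≤ a < b`, `n ≥ 1`, and
`a * n + 1 ≤ k ≤ b * n - 1`. -/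
theorem ucycle_ab_augmented_onto (a b n k : ℕ) (ha : 1 ≤ a) (hab : a < b) (hn : 1 ≤ n)
    (h1 : a * n + 1 ≤ k) (h2 : k ≤ b * n - 1) :
    HasUCycle (wordsOf (fun w : Fin k → Fin n =>
      ∀ x : Fin n, a ≤ (Finset.univ.filter fun i => w i = x).card ∧
        (Finset.univ.filter fun i => w i = x).card ≤ b)) := by
  exact ucycle_ab_augmented_onto_general (fun _ => a) (fun _ => b) (fun _ => hab)
    (by simpa [mul_comm] using h1)
    (by simp only [sum_const, card_univ, Fintype.card_fin, smul_eq_mul, mul_comm n b]; omega)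
end

section
/- Fix integers n, k with n ≥ k + 1 ≥ 4 and let D be the transition digraph for three-dimensional lattice paths of length n ending within ℓ¹-distance k of the origin: vertices are words v : Fin (n−1) → Σ with ‖∑_i v(i)‖₁ ≤ k + 1, and there is a directed edge from v to w iff v(j) = w(j−1) for all j with 1 ≤ j ≤ n−2 and the length-n word v(0), …, v(n−2), w(n−2) has letter-sum of ℓ¹ norm ≤ k. Then every vertex of D either has out-degree 6 or admits a directed path in D to a vertex of out-degree 6. -/
/-- The six unit step vectors `±e₁, ±e₂, ±e₃` in `ℤ³` (encoded as `ℤ × ℤ × ℤ`). -/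
def stepSet3 : Finset (ℤ × ℤ × ℤ) :=
  {(1, 0, 0), (-1, 0, 0), (0, 1, 0), (0, -1, 0), (0, 0, 1), (0, 0, -1)}

/-- The ℓ¹ norm on `ℤ³`. -/
def l1 (v : ℤ × ℤ × ℤ) : ℤ := |v.1| + |v.2.1| + |v.2.2|

/-- Vertices of the transition digraph: words of length `n - 1` over the step alphabet
whose letter-sum has ℓ¹ norm at most `k + 1`. -/
def Vert (n k : ℕ) : Type :=
  {v : Fin (n - 1) → ↥stepSet3 // l1 (∑ i, ((v i : ℤ × ℤ × ℤ))) ≤ (k : ℤ) + 1}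

/-- Directed edges of the transition digraph: `w` is obtained from `v` by deleting the
first letter and appending a new last letter, and the concatenated length-`n` word
(`v` followed by the last letter of `w`) has letter-sum of ℓ¹ norm at most `k`. -/
def Edge (n k : ℕ) (hn : 2 ≤ n) (v w : Vert n k) : Prop :=
  (∀ j : Fin (n - 1), ∀ _ : 1 ≤ j.val,
      w.1 ⟨j.val - 1, by have := j.isLt; omega⟩ = v.1 j) ∧
  l1 ((∑ i, (v.1 i : ℤ × ℤ × ℤ)) + (w.1 ⟨n - 2, by omega⟩ : ℤ × ℤ × ℤ)) ≤ (k : ℤ)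

/-!
Write `S` for the letter-sum of a vertex. If `‖S‖₁ < k`, each of the six letters may be appended.
Otherwise `S ≠ 0`, and as the letters sum to `S`, some letter `a` of the word has positive inner
product with `S`. As long as `‖S‖₁ ≥ k`, append a letter `b` with `‖S + b‖₁ < ‖S‖₁` that keeps
`⟨S + b, a⟩` positive. A discarded first letter other than `a` has nonpositive inner product with
`a`, so positivity persists until a copy of `a` comes to the front. Discarding it
then lowers the norm once more, to at most `k - 1`.
-/

/-- The standard inner product on `ℤ³`. Its sign against a step `c` tells whether subtracting `c`
lowers the ℓ¹ norm. -/
def dot3 (u v : ℤ × ℤ × ℤ) : ℤ := u.1 * v.1 + u.2.1 * v.2.1 + u.2.2 * v.2.2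

lemma dot3_sub_left (u v w : ℤ × ℤ × ℤ) : dot3 (u - v) w = dot3 u w - dot3 v w := by
  simp only [dot3, Prod.fst_sub, Prod.snd_sub]
  ring

lemma dot3_sum_right {ι : Type*} (s : Finset ι) (u : ℤ × ℤ × ℤ) (f : ι → ℤ × ℤ × ℤ) :
    dot3 u (∑ i ∈ s, f i) = ∑ i ∈ s, dot3 u (f i) := by
  simp only [dot3, Prod.fst_sum, Prod.snd_sum, Finset.mul_sum, Finset.sum_add_distrib]

lemma dot3_self_pos {u : ℤ × ℤ × ℤ} (hu : u ≠ 0) : 0 < dot3 u u := by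
  obtain ⟨x, y, z⟩ := u
  have hxyz : x ≠ 0 ∨ y ≠ 0 ∨ z ≠ 0 := by
    contrapose! hu
    simp [hu]
  rcases hxyz with h | h | h <;> simp only [dot3, ← sq] <;> positivity

lemma exists_dot3_sum_pos {ι : Type*} {s : Finset ι} {f : ι → ℤ × ℤ × ℤ}
    (hf : ∑ i ∈ s, f i ≠ 0) : ∃ i ∈ s, 0 < dot3 (∑ j ∈ s, f j) (f i) := by
  refine Finset.exists_lt_of_sum_lt (f := fun _ => 0) ?_
  rw [Finset.sum_const_zero, ← dot3_sum_right]
  exact dot3_self_pos hf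

lemma l1_zero : l1 0 = 0 := by simp [l1]

lemma l1_add_le (u v : ℤ × ℤ × ℤ) : l1 (u + v) ≤ l1 u + l1 v := by
  simp only [l1, Prod.fst_add, Prod.snd_add]
  linarith [abs_add_le u.1 v.1, abs_add_le u.2.1 v.2.1, abs_add_le u.2.2 v.2.2]

lemma l1_neg (u : ℤ × ℤ × ℤ) : l1 (-u) = l1 u := by
  simp [l1]

lemma l1_sub_le (u v : ℤ × ℤ × ℤ) : l1 (u - v) ≤ l1 u + l1 v := by
  simpa only [sub_eq_add_neg, l1_neg] using l1_add_le u (-v)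

lemma mem_stepSet3 {a : ℤ × ℤ × ℤ} :
    a ∈ stepSet3 ↔ a = (1, 0, 0) ∨ a = (-1, 0, 0) ∨ a = (0, 1, 0) ∨ a = (0, -1, 0) ∨
      a = (0, 0, 1) ∨ a = (0, 0, -1) := by
  simp [stepSet3]

lemma card_stepSet3 : stepSet3.card = 6 := rfl

lemma neg_mem_stepSet3 {a : ℤ × ℤ × ℤ} (ha : a ∈ stepSet3) : -a ∈ stepSet3 := by
  rcases mem_stepSet3.1 ha with rfl | rfl | rfl | rfl | rfl | rfl <;> decide

lemma l1_of_mem_stepSet3 {a : ℤ × ℤ × ℤ} (ha : a ∈ stepSet3) : l1 a = 1 := by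
  rcases mem_stepSet3.1 ha with rfl | rfl | rfl | rfl | rfl | rfl <;> decide

lemma dot3_nonpos_of_ne {a c : ℤ × ℤ × ℤ} (ha : a ∈ stepSet3) (hc : c ∈ stepSet3) (hca : c ≠ a) :
    dot3 c a ≤ 0 := by
  have hall : ∀ a ∈ stepSet3, ∀ c ∈ stepSet3, c ≠ a → dot3 c a ≤ 0 := by decide
  exact hall a ha c hc hca

lemma l1_sub_of_dot3_pos {S c : ℤ × ℤ × ℤ} (hc : c ∈ stepSet3) (hSc : 0 < dot3 S c) :
    l1 (S - c) = l1 S - 1 := by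
  obtain ⟨x, y, z⟩ := S
  rcases mem_stepSet3.1 hc with rfl | rfl | rfl | rfl | rfl | rfl <;>
    simp only [l1, dot3, Prod.mk_sub_mk] at hSc ⊢ <;> grind

lemma exists_mem_stepSet3_dot3_pos {S : ℤ × ℤ × ℤ} (hS : S ≠ 0) :
    ∃ d ∈ stepSet3, 0 < dot3 S d := by
  contrapose! hS
  obtain ⟨x, y, z⟩ := S
  simp only [mem_stepSet3, dot3, forall_eq_or_imp, forall_eq] at hS
  ext <;> simp only [Prod.fst_zero, Prod.snd_zero] <;> omega

lemma exists_l1_add_le_sub_one_dot3_pos {S a : ℤ × ℤ × ℤ} (ha : a ∈ stepSet3) (hS : 2 ≤ l1 S)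
    (hSa : 0 < dot3 S a) : ∃ b ∈ stepSet3, l1 (S + b) ≤ l1 S - 1 ∧ 0 < dot3 (S + b) a := by
  have hnorm : l1 (S - a) = l1 S - 1 := l1_sub_of_dot3_pos ha hSa
  have hne : S - a ≠ 0 := fun h => by
    rw [h, l1_zero] at hnorm
    omega
  -- Choosing `d` against `S - a` instead of `S` reserves one unit in the direction `a`.
  obtain ⟨d, hd, hpos⟩ := exists_mem_stepSet3_dot3_pos hne
  refine ⟨-d, neg_mem_stepSet3 hd, ?_, ?_⟩ <;> rw [← sub_eq_add_neg]
  · calc l1 (S - d) = l1 (S - a - d + a) := by congr 1; abel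
      _ ≤ l1 (S - a - d) + l1 a := l1_add_le _ _
      _ = l1 S - 1 := by rw [l1_sub_of_dot3_pos hd hpos, hnorm, l1_of_mem_stepSet3 ha]; ring
  · rw [dot3_sub_left]
    rcases eq_or_ne d a with rfl | hda
    · rwa [dot3_sub_left] at hpos
    · linarith [dot3_nonpos_of_ne ha hd hda]

section ShiftAppend

variable {α : Type*} {m : ℕ} (v : Fin (m + 1) → α) (b : α)

/-- The word obtained from `v` by deleting its first letter and appending `b`. -/
def shiftAppend : Fin (m + 1) → α := Fin.snoc (α := fun _ => α) (Fin.tail v) b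

lemma shiftAppend_castSucc (i : Fin m) : shiftAppend v b i.castSucc = v i.succ :=
  Fin.snoc_castSucc (α := fun _ => α) _ _ _

lemma shiftAppend_last : shiftAppend v b (Fin.last m) = b :=
  Fin.snoc_last (α := fun _ => α) _ _

lemma eq_shiftAppend_iff {w : Fin (m + 1) → α} :
    w = shiftAppend v b ↔ (∀ i : Fin m, w i.castSucc = v i.succ) ∧ w (Fin.last m) = b := by
  rw [funext_iff, Fin.forall_fin_succ']
  simp only [shiftAppend_castSucc, shiftAppend_last]

lemma sum_shiftAppend {M : Type*} [AddCommGroup M] (f : α → M) :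
    ∑ i, f (shiftAppend v b i) = ∑ i, f (v i) + f b - f (v 0) := by
  rw [Fin.sum_univ_castSucc, Fin.sum_univ_succ (fun i => f (v i))]
  simp only [shiftAppend_castSucc, shiftAppend_last]
  abel

end ShiftAppend

namespace Vert

variable {m k : ℕ} (v : Vert (m + 2) k)

/-- The underlying word of a vertex, with its length `m + 2 - 1` written as `m + 1`. -/
def word : Fin (m + 1) → stepSet3 := v.1

/-- The letter-sum of a vertex, that is, the endpoint of the lattice path it describes. -/
def endpoint : ℤ × ℤ × ℤ := ∑ i, (v.word i : ℤ × ℤ × ℤ)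

lemma l1_endpoint_le : l1 v.endpoint ≤ k + 1 := v.2

lemma word_injective : Function.Injective (word : Vert (m + 2) k → Fin (m + 1) → stepSet3) :=
  Subtype.val_injective

lemma l1_sum_shiftAppend_word_le {b : stepSet3} (hb : l1 (v.endpoint + b) ≤ k) :
    l1 (∑ i, (shiftAppend v.word b i).1) ≤ k + 1 := by
  rw [sum_shiftAppend v.word b Subtype.val]
  calc l1 (v.endpoint + b - v.word 0) ≤ l1 (v.endpoint + b) + l1 (v.word 0) := l1_sub_le _ _
    _ ≤ k + 1 := add_le_add hb (l1_of_mem_stepSet3 (v.word 0).2).le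

/-- The out-neighbour of `v` reached by appending the letter `b`. -/
def next (b : stepSet3) (hb : l1 (v.endpoint + b) ≤ k) : Vert (m + 2) k :=
  ⟨shiftAppend v.word b, v.l1_sum_shiftAppend_word_le hb⟩

variable {v} {b : stepSet3} (hb : l1 (v.endpoint + b) ≤ k)

lemma word_next : (v.next b hb).word = shiftAppend v.word b := rfl

lemma endpoint_next : (v.next b hb).endpoint = v.endpoint + b - v.word 0 :=
  sum_shiftAppend v.word b Subtype.val

lemma edge_iff_exists_next (h : 2 ≤ m + 2) {w : Vert (m + 2) k} :
    Edge (m + 2) k h v w ↔ ∃ b hb, v.next b hb = w := by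
  have hshift : Edge (m + 2) k h v w ↔
      (∀ i : Fin m, w.word i.castSucc = v.word i.succ) ∧
        l1 (v.endpoint + w.word (Fin.last m)) ≤ k := by
    refine and_congr_left fun _ => ⟨fun hw i => hw i.succ (by simp), fun hw j hj => ?_⟩
    obtain ⟨i, rfl⟩ := Fin.exists_succ_eq_of_ne_zero (n := m) (x := j) (by rintro rfl; simp at hj)
    exact hw i
  rw [hshift]
  constructor
  · rintro ⟨hw, hb⟩
    exact ⟨_, hb, word_injective ((eq_shiftAppend_iff _ _).2 ⟨hw, rfl⟩).symm⟩
  · rintro ⟨b, hb, rfl⟩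
    simp only [word_next, shiftAppend_castSucc, shiftAppend_last, implies_true, true_and]
    exact hb

lemma edge_next (h : 2 ≤ m + 2) : Edge (m + 2) k h v (v.next b hb) :=
  (edge_iff_exists_next h).2 ⟨b, hb, rfl⟩

variable (v) in
lemma card_edge (h : 2 ≤ m + 2) :
    Nat.card {w // Edge (m + 2) k h v w} =
      Nat.card {b : stepSet3 // l1 (v.endpoint + b) ≤ k} := by
  refine (Nat.card_congr (Equiv.ofBijective
    (fun b => ⟨v.next b.1 b.2, edge_next b.2 h⟩) ⟨fun b c hbc => ?_, fun w => ?_⟩)).symm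
  · have hword := congrArg (fun w => w.1.word (Fin.last m)) hbc
    simp only [word_next, shiftAppend_last] at hword
    exact Subtype.ext hword
  · obtain ⟨b, hb, hw⟩ := (edge_iff_exists_next h).1 w.2
    exact ⟨⟨b, hb⟩, Subtype.ext hw⟩

lemma card_edge_eq_six (h : 2 ≤ m + 2) (hv : l1 v.endpoint < k) :
    Nat.card {w // Edge (m + 2) k h v w} = 6 := by
  have hall : ∀ b : stepSet3, l1 (v.endpoint + b) ≤ k := fun b => by
    have := l1_add_le v.endpoint b
    rw [l1_of_mem_stepSet3 b.2] at this
    omega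
  rw [card_edge, Nat.card_congr (Equiv.subtypeUnivEquiv hall), Nat.card_eq_fintype_card,
    Fintype.card_coe, card_stepSet3]

lemma exists_next_of_dot3_pos (hk : 2 ≤ k) (hv : k ≤ l1 v.endpoint) {a : stepSet3}
    (ha : 0 < dot3 v.endpoint a) :
    ∃ b : stepSet3, ∃ hb : l1 (v.endpoint + b) ≤ k,
      (v.word 0 = a → l1 (v.next b hb).endpoint < k) ∧
        (v.word 0 ≠ a → 0 < dot3 (v.next b hb).endpoint a) := by
  obtain ⟨b, hbmem, hnorm, hpos⟩ := exists_l1_add_le_sub_one_dot3_pos a.2 (by omega) ha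
  have hb : l1 (v.endpoint + b) ≤ k := by linarith [v.l1_endpoint_le]
  refine ⟨⟨b, hbmem⟩, hb, fun hfront => ?_, fun hfront => ?_⟩ <;> rw [endpoint_next]
  · rw [hfront, l1_sub_of_dot3_pos a.2 hpos]
    omega
  · rw [dot3_sub_left]
    linarith [dot3_nonpos_of_ne a.2 (v.word 0).2 (Subtype.coe_ne_coe.2 hfront)]

lemma exists_reflTransGen_of_dot3_pos (h : 2 ≤ m + 2) (hk : 2 ≤ k) (i : Fin (m + 1))
    (hi : 0 < dot3 v.endpoint (v.word i)) :
    ∃ u, Relation.ReflTransGen (Edge (m + 2) k h) v u ∧ l1 u.endpoint < k := by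
  induction i using Fin.induction generalizing v with
  | zero =>
    rcases lt_or_ge (l1 v.endpoint) k with hv | hv
    · exact ⟨v, .refl, hv⟩
    obtain ⟨b, hb, hfront, -⟩ := exists_next_of_dot3_pos hk hv hi
    exact ⟨_, .single (edge_next hb h), hfront rfl⟩
  | succ i ih =>
    rcases lt_or_ge (l1 v.endpoint) k with hv | hv
    · exact ⟨v, .refl, hv⟩
    obtain ⟨b, hb, hfront, hother⟩ := exists_next_of_dot3_pos hk hv hi
    by_cases h0 : v.word 0 = v.word i.succ
    · exact ⟨_, .single (edge_next hb h), hfront h0⟩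
    · obtain ⟨u, hu, hlt⟩ := ih (v := v.next b hb) (by
        rw [word_next, shiftAppend_castSucc]
        exact hother h0)
      exact ⟨u, .head (edge_next hb h) hu, hlt⟩

variable (v) in
lemma exists_reflTransGen_l1_endpoint_lt (h : 2 ≤ m + 2) (hk : 2 ≤ k) :
    ∃ u, Relation.ReflTransGen (Edge (m + 2) k h) v u ∧ l1 u.endpoint < k := by
  by_cases hv : v.endpoint = 0
  · exact ⟨v, .refl, by rw [hv, l1_zero]; omega⟩
  · obtain ⟨i, -, hi⟩ := exists_dot3_sum_pos hv
    exact exists_reflTransGen_of_dot3_pos h hk i hi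

end Vert

theorem lattice_digraph_reaches_outdeg_six_general (n k : ℕ) (hk : 2 ≤ k) (hn : 2 ≤ n)
    (v : Vert n k) :
    ∃ u : Vert n k, Relation.ReflTransGen (Edge n k hn) v u ∧
      Nat.card {w : Vert n k // Edge n k hn u w} = 6 := by
  obtain ⟨m, rfl⟩ := Nat.exists_eq_add_of_le' hn
  obtain ⟨u, hvu, hu⟩ := v.exists_reflTransGen_l1_endpoint_lt hn hk
  exact ⟨u, hvu, u.card_edge_eq_six hn hu⟩

/-- In the transition digraph for three-dimensional lattice paths of length
`n ≥ k + 1 ≥ 4` ending within ℓ¹-distance `k` of the origin, every vertex has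
out-degree `6` or admits a directed path to a vertex of out-degree `6`. -/
theorem lattice_digraph_reaches_outdeg_six (n k : ℕ) (hk : 4 ≤ k + 1) (hn : k + 1 ≤ n) :
    ∀ v : Vert n k,
      Nat.card {w : Vert n k // Edge n k (by omega) v w} = 6 ∨
      ∃ u : Vert n k, Relation.ReflTransGen (Edge n k (by omega)) v u ∧
        Nat.card {w : Vert n k // Edge n k (by omega) u w} = 6 := fun v =>
  Or.inr (lattice_digraph_reaches_outdeg_six_general n k (by omega) (by omega) v)
end

section
/- For every integer n ≥ 2, there exists a universal cycle for the set of competition rankings of n players, i.e., words w : Fin n → Fin n such that for every j ∈ Fin n, the value of w(j) equals the number of indices i ∈ Fin n with w(i) < w(j) (so, in 1-based terms, each player's rank is 1 plus the number of players ranked strictly better). -/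
/-!
The argument is the one producing de Bruijn cycles. Say that a permutation `f` of a set `S` of words
is a shift if `f w` arises from `w` by deleting the first letter and appending some letter. Reading
the first letters along a shift with a single cycle gives a universal cycle. If `S` is closed under
rotation, rotation is a shift; composing a shift with the transposition of two words that share
their tail gives another shift, and merges the two cycles when they are distinct. Hence for
some shift any two words with the same tail lie on one cycle. By rotating, so do any two words that
differ in a single letter, and it remains to connect `S` by single-letter changes.

For competition rankings, break the ties one player at a time until all ranks are distinct, each
time moving one player to the end of its tie class. Then collapse a ranking without ties to the
one with all players tied by letting the players, in the order of their ranks, join the leaders.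
-/

open Equiv Equiv.Perm Relation Set

theorem eqvGen_of_forall_lt {α : Type*} {r : α → α → Prop} {u : ℕ → α} {n : ℕ}
    (h : ∀ k < n, r (u k) (u (k + 1))) : EqvGen r (u 0) (u n) := by
  induction n with
  | zero => exact .refl _
  | succ n ih => exact .trans _ _ _ (ih fun k hk => h k (by lia)) (.rel _ _ (h n (by lia)))

section Cycles

variable {α β : Type*} {f g : Perm α} {a b x y : α}

theorem sameCycle_of_forall_sameCycle_apply (h : ∀ z, SameCycle g z (f z))
    (hxy : SameCycle f x y) : SameCycle g x y := by
  obtain ⟨k, rfl⟩ := hxy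
  induction k generalizing x with
  | zero => exact SameCycle.refl g x
  | succ k ih =>
    rw [zpow_add_one, Perm.mul_apply]
    exact (h x).trans ih
  | pred k ih =>
    have hinv : SameCycle g (f⁻¹ x) x := by simpa using h (f⁻¹ x)
    rw [zpow_sub_one, Perm.mul_apply]
    exact hinv.symm.trans ih

theorem sameCycle_mul_swap [Finite α] [DecidableEq α] (hab : ¬ SameCycle f a b) :
    SameCycle (f * swap a b) a b := by
  have ha : SameCycle (f * swap a b) a (f b) := ⟨1, by simp⟩
  -- The permutations agree along the cycle of `b`, which avoids `a`, until it returns to `b`.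
  have hpow (k : ℕ) : SameCycle (f * swap a b) a ((f ^ (k + 1)) b) := by
    induction k with
    | zero => simpa using ha
    | succ k ih =>
      rw [pow_succ', Perm.mul_apply]
      have hne : (f ^ (k + 1)) b ≠ a := fun h => hab (SameCycle.symm ⟨(k + 1 : ℕ), h⟩)
      obtain hb | hb := eq_or_ne ((f ^ (k + 1)) b) b
      · rwa [hb]
      · exact ih.trans ⟨1, by simp [swap_apply_of_ne_of_ne hne hb]⟩
  obtain ⟨k, hk, -, hkb⟩ := (SameCycle.refl f b).exists_pow_eq''
  simpa [Nat.sub_add_cancel hk, hkb] using hpow (k - 1)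

theorem sameCycle_setoid_le_mul_swap [Finite α] [DecidableEq α] (hab : ¬ SameCycle f a b) :
    SameCycle.setoid f ≤ SameCycle.setoid (f * swap a b) := by
  refine fun x y => sameCycle_of_forall_sameCycle_apply fun z => ?_
  have hz : SameCycle (f * swap a b) z (swap a b z) := by
    rw [swap_apply_def]
    split_ifs with hza hzb
    · rw [hza]
      exact sameCycle_mul_swap hab
    · rw [hzb]
      exact (sameCycle_mul_swap hab).symm
    · exact SameCycle.refl _ z
  simpa using hz.apply_right

theorem exists_mul_forall_sameCycle [Finite α] (f : Perm α) (t : α → β) :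
    ∃ σ : Perm α, (∀ x, t (σ x) = t x) ∧ ∀ x y, t x = t y → SameCycle (f * σ) x y := by
  classical
  obtain ⟨σ, hσ, hmax⟩ := (toFinite {σ : Perm α | ∀ x, t (σ x) = t x}).exists_maximalFor
    (fun σ => SameCycle.setoid (f * σ)) _ ⟨1, fun _ => rfl⟩
  refine ⟨σ, hσ, fun x y hxy => by_contra fun hne => hne ?_⟩
  have hswap (z : α) : t (swap x y z) = t z := by
    rw [swap_apply_def]
    split_ifs <;> simp_all
  refine hmax (j := σ * swap x y) (fun z => (hσ _).trans (hswap z)) ?_ ?_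
  · exact sameCycle_setoid_le_mul_swap hne
  · exact sameCycle_mul_swap hne

theorem pow_apply_eq_pow_apply_iff_natCast_eq_s15 [Finite α] (hf : ∀ x y, SameCycle f x y) {N : ℕ}
    (hN : Nat.card α = N) (x : α) (k l : ℕ) :
    (f ^ k) x = (f ^ l) x ↔ (k : ZMod N) = l := by
  have := Fintype.ofFinite α
  have hcycle : f.IsCycleOn (Finset.univ : Finset α) :=
    ⟨by simp, fun x _ y _ => hf x y⟩
  rw [hcycle.pow_apply_eq_pow_apply (Finset.mem_univ x), ZMod.natCast_eq_natCast_iff,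
    Finset.card_univ, ← Nat.card_eq_fintype_card, hN]

theorem bijective_pow_val_apply_s15 [Finite α] (hf : ∀ x y, SameCycle f x y) {N : ℕ}
    (hN : Nat.card α = N) (x : α) : Function.Bijective fun i : ZMod N => (f ^ i.val) x := by
  have : Nonempty α := ⟨x⟩
  have : NeZero N := ⟨hN ▸ Nat.card_pos.ne'⟩
  have hpow := pow_apply_eq_pow_apply_iff_natCast_eq_s15 hf hN x
  refine ⟨fun i j hij => by simpa using (hpow _ _).1 hij, fun y => ?_⟩
  obtain ⟨k, -, rfl⟩ := (hf x y).exists_pow_eq'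
  exact ⟨k, (hpow _ _).2 (by simp)⟩

end Cycles

section Shifts

variable {A : Type*} {m : ℕ} {S : Finset (Fin (m + 1) → A)} {f g : Perm S}

/-- The permutation `f` of a set `S` of words moves from each word to one that can follow it in a
cyclic sequence: it deletes the first letter and appends some letter at the end. -/
def IsShift (f : Perm S) : Prop :=
  ∀ w : S, Fin.init (f w).1 = Fin.tail w.1

theorem IsShift.pow_apply_zero (hf : IsShift f) (w : S) {k : ℕ} (hk : k < m + 1) :
    ((f ^ k) w).1 0 = w.1 ⟨k, hk⟩ := by
  induction k generalizing w with
  | zero => rfl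
  | succ k ih =>
    rw [pow_succ, Perm.mul_apply, ih]
    exact congrFun (hf w) ⟨k, by lia⟩

theorem IsShift.hasUCycle (hf : IsShift f) (hcycle : ∀ w w', SameCycle f w w')
    (hS : S.Nonempty) : HasUCycle S := by
  obtain ⟨x⟩ := hS.to_subtype
  have : NeZero S.card := ⟨hS.card_ne_zero⟩
  have hcard : Nat.card S = S.card := by simp
  have hbij := bijective_pow_val_apply_s15 hcycle hcard x
  have hword (i : ZMod S.card) (j : Fin (m + 1)) :
      ((f ^ i.val) x).1 j = ((f ^ (i + (j.val : ZMod S.card)).val) x).1 0 := by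
    have hadd : (f ^ (i + (j.val : ZMod S.card)).val) x = (f ^ (j.val + i.val)) x :=
      (pow_apply_eq_pow_apply_iff_natCast_eq_s15 hcycle hcard x _ _).2 (by simp [add_comm])
    rw [hadd, pow_add, Perm.mul_apply, hf.pow_apply_zero _ j.2]
  have hbijOn : BijOn (fun i : ZMod S.card => ((f ^ i.val) x).1) univ S :=
    ⟨fun i _ => ((f ^ i.val) x).2, (Subtype.val_injective.comp hbij.1).injOn, fun w hw =>
      (hbij.2 ⟨w, hw⟩).imp fun _ hi => ⟨mem_univ _, congrArg Subtype.val hi⟩⟩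
  exact ⟨fun i => ((f ^ i.val) x).1 0, hbijOn.congr fun i _ => funext (hword i)⟩

theorem IsShift.sameCycle_apply (hf : IsShift f) (hg : IsShift g)
    (htail : ∀ w w' : S, Fin.tail w.1 = Fin.tail w'.1 → SameCycle f w w') (w : S) :
    SameCycle f w (g w) := by
  have hw : SameCycle f w (f.symm (g w)) :=
    htail _ _ (by rw [← hf (f.symm _), apply_symm_apply, hg])
  simpa using hw.apply_right

/-- The rotation of words by one position, as a permutation of a rotation-invariant set of words. -/
def wordRotation (hS : ∀ w ∈ S, w ∘ finRotate (m + 1) ∈ S) : Perm S :=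
  subtypePermOfFintype ((finRotate (m + 1)).symm.arrowCongr (Equiv.refl A)) hS

theorem wordRotation_apply (hS : ∀ w ∈ S, w ∘ finRotate (m + 1) ∈ S) (w : S) (j : Fin (m + 1)) :
    (wordRotation hS w).1 j = w.1 (j + 1) :=
  congrArg w.1 (finRotate_apply j)

theorem isShift_wordRotation (hS : ∀ w ∈ S, w ∘ finRotate (m + 1) ∈ S) :
    IsShift (wordRotation hS) := by
  intro w
  funext i
  rw [Fin.init, wordRotation_apply, Fin.coeSucc_eq_succ, Fin.tail]

theorem exists_isShift_forall_sameCycle (hS : ∀ w ∈ S, w ∘ finRotate (m + 1) ∈ S) :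
    ∃ f : Perm S, IsShift f ∧
      ∀ w w' : S, Fin.tail w.1 = Fin.tail w'.1 → SameCycle f w w' := by
  obtain ⟨σ, hσ, hcycle⟩ := exists_mul_forall_sameCycle (wordRotation hS) fun w => Fin.tail w.1
  exact ⟨wordRotation hS * σ, fun w => (isShift_wordRotation hS (σ w)).trans (hσ w), hcycle⟩

/-- Two words of `S` agree except possibly at one position. -/
def SingleLetterChange {A : Type*} {k : ℕ} {S : Finset (Fin k → A)} (w w' : S) : Prop :=
  ∃ a, EqOn w.1 w'.1 {a}ᶜ

theorem IsShift.sameCycle_of_singleLetterChange (hf : IsShift f)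
    (hS : ∀ w ∈ S, w ∘ finRotate (m + 1) ∈ S)
    (htail : ∀ w w' : S, Fin.tail w.1 = Fin.tail w'.1 → SameCycle f w w') {w w' : S}
    (h : SingleLetterChange w w') : SameCycle f w w' := by
  obtain ⟨a, ha⟩ := h
  induction a using Fin.induction generalizing w w' with
  | zero => exact htail w w' (funext fun i => ha (Fin.succ_ne_zero i))
  | succ a ih =>
    have hrot (v : S) : SameCycle f v (wordRotation hS v) :=
      hf.sameCycle_apply (isShift_wordRotation hS) htail v
    have hne {j : Fin (m + 1)} (hj : j ≠ a.castSucc) : j + 1 ≠ a.succ := by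
      rwa [← Fin.coeSucc_eq_succ, ne_eq, add_left_inj]
    refine (hrot w).trans (SameCycle.trans (ih fun j hj => ?_) (hrot w').symm)
    rw [wordRotation_apply, wordRotation_apply, ha (hne hj)]

theorem hasUCycle_of_forall_eqvGen_singleLetterChange (hne : S.Nonempty)
    (hS : ∀ w ∈ S, w ∘ finRotate (m + 1) ∈ S)
    (hconn : ∀ w w' : S, EqvGen SingleLetterChange w w') : HasUCycle S := by
  obtain ⟨f, hf, htail⟩ := exists_isShift_forall_sameCycle hS
  refine hf.hasUCycle (fun w w' => ?_) hne
  exact (SameCycle.equivalence f).eqvGen_iff.1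
    (EqvGen.mono (fun _ _ => hf.sameCycle_of_singleLetterChange hS htail) _ _ (hconn w w'))

end Shifts

section CompetitionRankings

variable {β γ : Type*} [LinearOrder β] [LinearOrder γ] {n : ℕ}

/-- The competition ranking of `n` players by their scores `f`, where a smaller score is better and
the best rank is `0`. -/
def competitionRank (f : Fin n → β) (j : Fin n) : Fin n :=
  ⟨(Finset.univ.filter fun i => f i < f j).card,
    (Finset.card_lt_univ_of_notMem (x := j) (by simp)).trans_eq (Fintype.card_fin n)⟩

theorem val_competitionRank (f : Fin n → β) (j : Fin n) :
    (competitionRank f j).val = (Finset.univ.filter fun i => f i < f j).card :=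
  rfl

theorem competitionRank_congr {f : Fin n → β} {g : Fin n → γ} {j : Fin n}
    (h : ∀ i, f i < f j ↔ g i < g j) : competitionRank f j = competitionRank g j := by
  simp only [competitionRank, h]

theorem competitionRank_comp_perm (f : Fin n → β) (σ : Perm (Fin n)) :
    competitionRank (f ∘ σ) = competitionRank f ∘ σ := by
  funext j
  rw [Fin.ext_iff, Function.comp_apply, val_competitionRank, val_competitionRank]
  exact Finset.card_equiv σ (by simp)

theorem competitionRank_lt_competitionRank_iff (f : Fin n → β) (i j : Fin n) :
    competitionRank f i < competitionRank f j ↔ f i < f j := by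
  have hle {i j : Fin n} (hij : f i ≤ f j) : competitionRank f i ≤ competitionRank f j := by
    rw [Fin.le_def, val_competitionRank, val_competitionRank]
    exact Finset.card_le_card (Finset.monotone_filter_right _ fun _ _ hk => lt_of_lt_of_le hk hij)
  refine ⟨fun h => lt_of_not_ge fun hji => h.not_ge (hle hji), fun hij => ?_⟩
  rw [Fin.lt_def, val_competitionRank, val_competitionRank]
  apply Finset.card_lt_card
  rw [Finset.ssubset_iff_of_subset (Finset.monotone_filter_right _ fun _ _ hk => hk.trans hij)]
  exact ⟨i, by simpa, by simp⟩

theorem competitionRank_injective {f : Fin n → β} (hf : Function.Injective f) :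
    Function.Injective (competitionRank f) := by
  intro i j hij
  by_contra hne
  obtain h | h := (hf.ne hne).lt_or_gt <;>
    simp [← competitionRank_lt_competitionRank_iff, hij] at h

/-- The competition rankings of `n` players, as words. -/
noncomputable def competitionRankings (n : ℕ) : Finset (Fin n → Fin n) :=
  wordsOf fun w => ∀ j : Fin n, (w j).val = (Finset.univ.filter fun i => w i < w j).card

theorem mem_competitionRankings {w : Fin n → Fin n} :
    w ∈ competitionRankings n ↔ competitionRank w = w := by
  simp only [competitionRankings, wordsOf, Finset.mem_filter_univ, funext_iff, Fin.ext_iff,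
    competitionRank, eq_comm]

/-- `competitionRank f` as an element of the set of competition rankings. -/
noncomputable def rankingOf (f : Fin n → β) : competitionRankings n :=
  ⟨competitionRank f, mem_competitionRankings.2 <| funext fun _ =>
    competitionRank_congr fun _ => competitionRank_lt_competitionRank_iff f _ _⟩

theorem rankingOf_congr {f : Fin n → β} {g : Fin n → γ} (h : ∀ i j, f i < f j ↔ g i < g j) :
    rankingOf f = rankingOf g :=
  Subtype.ext (funext fun j => competitionRank_congr fun i => h i j)

theorem rankingOf_coe (w : competitionRankings n) : rankingOf w.1 = w :=
  Subtype.ext (mem_competitionRankings.1 w.2)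

theorem singleLetterChange_rankingOf {f : Fin n → β} {g : Fin n → γ} (a : Fin n)
    (h : ∀ j ≠ a, ∀ i, f i < f j ↔ g i < g j) : SingleLetterChange (rankingOf f) (rankingOf g) :=
  ⟨a, fun j hj => competitionRank_congr (h j hj)⟩

/-- Scores that order the players as `f` does, except that each of the first `k` players is placed
behind all tied players of larger index. With this choice, passing from `k` to `k + 1` changes the
rank of player `k` only. -/
def tieBreak {α : Type*} (f : Fin n → α) (k : ℕ) (i : Fin n) : α ×ₗ ℕ :=
  toLex (f i, if i.val < k then n - i.val else 0)

theorem tieBreak_injective {α : Type*} (f : Fin n → α) : Function.Injective (tieBreak f n) := by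
  intro i j hij
  have := congrArg (fun p => (ofLex p).2) hij
  simp only [tieBreak, ofLex_toLex, Fin.is_lt, if_true] at this
  lia

theorem eqvGen_rankingOf_tieBreak (f : Fin n → β) :
    EqvGen SingleLetterChange (rankingOf f) (rankingOf (tieBreak f n)) := by
  have hzero : rankingOf f = rankingOf (tieBreak f 0) :=
    rankingOf_congr fun i j => by simp [tieBreak, Prod.Lex.toLex_lt_toLex]
  rw [hzero]
  refine eqvGen_of_forall_lt (u := fun k => rankingOf (tieBreak f k)) fun k hk => ?_
  refine singleLetterChange_rankingOf ⟨k, hk⟩ fun j hj i => ?_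
  have hj : j.val ≠ k := Fin.val_ne_iff.2 hj
  simp only [tieBreak, Prod.Lex.toLex_lt_toLex]
  refine or_congr_right (and_congr_right fun _ => ?_)
  split_ifs <;> lia

theorem eqvGen_rankingOf_const {w : Fin n → Fin n} (hw : Function.Injective w) :
    EqvGen SingleLetterChange (rankingOf w) (rankingOf fun _ => (0 : ℕ)) := by
  -- At stage `k` the players with `w`-rank less than `k` are tied for the lead.
  let u (k : ℕ) (i : Fin n) : ℕ := max k (w i + 1)
  have hzero : rankingOf w = rankingOf (u 0) := rankingOf_congr fun i j => by simp [u]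
  have hlast : (rankingOf fun _ => (0 : ℕ)) = rankingOf (u n) := rankingOf_congr fun i j => by
    simp only [u]
    lia
  rw [hzero, hlast]
  refine eqvGen_of_forall_lt (u := fun k => rankingOf (u k)) fun k hk => ?_
  obtain ⟨a, ha⟩ := Finite.surjective_of_injective hw ⟨k, hk⟩
  refine singleLetterChange_rankingOf a fun j hj i => ?_
  have hj : (w j).val ≠ k := fun h => hj (hw ((Fin.ext h).trans ha.symm))
  simp only [u]
  lia

theorem eqvGen_singleLetterChange_competitionRankings (w w' : competitionRankings n) :
    EqvGen SingleLetterChange w w' := by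
  have hconst (v : competitionRankings n) :
      EqvGen SingleLetterChange v (rankingOf fun _ => (0 : ℕ)) := by
    have hbreak := eqvGen_rankingOf_tieBreak v.1
    rw [rankingOf_coe, ← rankingOf_coe (rankingOf _)] at hbreak
    exact hbreak.trans _ _ _
      (eqvGen_rankingOf_const (competitionRank_injective (tieBreak_injective _)))
  exact (hconst w).trans _ _ _ ((hconst w').symm _ _)

theorem comp_perm_mem_competitionRankings {w : Fin n → Fin n} (hw : w ∈ competitionRankings n)
    (σ : Perm (Fin n)) : w ∘ σ ∈ competitionRankings n := by
  rw [mem_competitionRankings] at hw ⊢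
  rw [competitionRank_comp_perm, hw]

end CompetitionRankings

/-- For `n ≥ 2`, a U-cycle of competition rankings of `n` players exists: words
`w : Fin n → Fin n` such that each player's (0-based) rank equals the number of
players ranked strictly better. -/
theorem ucycle_competition_rankings (n : ℕ) (hn : 2 ≤ n) :
    HasUCycle (wordsOf (fun w : Fin n → Fin n =>
      ∀ j : Fin n, (w j).val = (Finset.univ.filter fun i => w i < w j).card)) := by
  obtain ⟨m, rfl⟩ : ∃ m, n = m + 1 := ⟨n - 1, by lia⟩
  have hne : (competitionRankings (m + 1)).Nonempty := ⟨_, (rankingOf id).2⟩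
  exact hasUCycle_of_forall_eqvGen_singleLetterChange hne
    (fun _ hw => comp_perm_mem_competitionRankings hw _)
    eqvGen_singleLetterChange_competitionRankings
end
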